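/- arXiv:1006.3501 — 5 statements merged into one kernel-verified Lean document; each statement's English description precedes it below -/
import Mathlib

section
/- Let C be a spherical fusion category over a commutative ring k with representative set I of simple objects, and suppose dim(C) is invertible in k. For half braidings (A,σ) and (B,ρ) of C, define the k-linear endomorphism π of Hom_C(A,B) by π(f) = dim(C)^{-1} · Σ_{i∈I} dim(i) · (ev_l(i) ⊗ id_B)(id_{i*} ⊗ ρ_i)(id_{i*} ⊗ f ⊗ id_i)(σ_{i*} ⊗ id_i)(id_A ⊗ coev_r(i)). Then π is an idempotent (π∘π = π) whose image is exactly Hom_{Z(C)}((A,σ),(B,ρ)) = { f ∈ Hom_C(A,B) : (id_X ⊗ f)σ_X = ρ_X(f ⊗ id_X) for all objects X of C }. -/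
open CategoryTheory CategoryTheory.Limits MonoidalCategory

universe v u w

/-- A pivotal category: a monoidal category in which every object is equipped with a dual
object and with evaluation/coevaluation morphisms forming a left duality and a right
duality, such that left and right duals of morphisms coincide, the left and right
monoidal constraints coincide, and the left and right evaluations of the unit coincide. -/
class PivotalCat (C : Type u) [Category.{v} C] [MonoidalCategory C] where
  dual : C → C
  evl : ∀ X : C, dual X ⊗ X ⟶ 𝟙_ C
  coevl : ∀ X : C, 𝟙_ C ⟶ X ⊗ dual X
  evr : ∀ X : C, X ⊗ dual X ⟶ 𝟙_ C
  coevr : ∀ X : C, 𝟙_ C ⟶ dual X ⊗ X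
  left_zigzag₁ : ∀ X : C,
    (λ_ X).inv ≫ (coevl X ▷ X) ≫ (α_ X (dual X) X).hom ≫ (X ◁ evl X) ≫ (ρ_ X).hom = 𝟙 X
  left_zigzag₂ : ∀ X : C,
    (ρ_ (dual X)).inv ≫ (dual X ◁ coevl X) ≫ (α_ (dual X) X (dual X)).inv ≫
      (evl X ▷ dual X) ≫ (λ_ (dual X)).hom = 𝟙 (dual X)
  right_zigzag₁ : ∀ X : C,
    (ρ_ X).inv ≫ (X ◁ coevr X) ≫ (α_ X (dual X) X).inv ≫ (evr X ▷ X) ≫ (λ_ X).hom = 𝟙 X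
  right_zigzag₂ : ∀ X : C,
    (λ_ (dual X)).inv ≫ (coevr X ▷ dual X) ≫ (α_ (dual X) X (dual X)).hom ≫
      (dual X ◁ evr X) ≫ (ρ_ (dual X)).hom = 𝟙 (dual X)
  ldual_eq_rdual : ∀ {X Y : C} (f : X ⟶ Y),
    (ρ_ (dual Y)).inv ≫ (dual Y ◁ coevl X) ≫ (dual Y ◁ (f ▷ dual X)) ≫
      (α_ (dual Y) Y (dual X)).inv ≫ (evl Y ▷ dual X) ≫ (λ_ (dual X)).hom =
    (λ_ (dual Y)).inv ≫ (coevr X ▷ dual Y) ≫ ((dual X ◁ f) ▷ dual Y) ≫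
      (α_ (dual X) Y (dual Y)).hom ≫ (dual X ◁ evr Y) ≫ (ρ_ (dual X)).hom
  constraint_eq : ∀ X Y : C,
    (ρ_ (dual X ⊗ dual Y)).inv ≫ ((dual X ⊗ dual Y) ◁ coevl (Y ⊗ X)) ≫
      (α_ (dual X) (dual Y) ((Y ⊗ X) ⊗ dual (Y ⊗ X))).hom ≫
      (dual X ◁ (α_ (dual Y) (Y ⊗ X) (dual (Y ⊗ X))).inv) ≫
      (dual X ◁ (((α_ (dual Y) Y X).inv ≫ (evl Y ▷ X) ≫ (λ_ X).hom) ▷ dual (Y ⊗ X))) ≫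
      (α_ (dual X) X (dual (Y ⊗ X))).inv ≫ (evl X ▷ dual (Y ⊗ X)) ≫ (λ_ (dual (Y ⊗ X))).hom =
    (λ_ (dual X ⊗ dual Y)).inv ≫ (coevr (Y ⊗ X) ▷ (dual X ⊗ dual Y)) ≫
      (α_ (dual (Y ⊗ X)) (Y ⊗ X) (dual X ⊗ dual Y)).hom ≫
      (dual (Y ⊗ X) ◁ ((α_ Y X (dual X ⊗ dual Y)).hom ≫ (Y ◁ (α_ X (dual X) (dual Y)).inv) ≫
        (Y ◁ (evr X ▷ dual Y)) ≫ (Y ◁ (λ_ (dual Y)).hom) ≫ evr Y)) ≫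
      (ρ_ (dual (Y ⊗ X))).hom
  ev_unit : (ρ_ (dual (𝟙_ C))).inv ≫ evl (𝟙_ C) = (λ_ (dual (𝟙_ C))).inv ≫ evr (𝟙_ C)

namespace PivotalCat

variable {C : Type u} [Category.{v} C] [MonoidalCategory C] [PivotalCat C]

/-- The (common left = right) dual of a morphism. -/
def pdual {X Y : C} (f : X ⟶ Y) : dual Y ⟶ dual X :=
  (ρ_ (dual Y)).inv ≫ (dual Y ◁ coevl X) ≫ (dual Y ◁ (f ▷ dual X)) ≫
    (α_ (dual Y) Y (dual X)).inv ≫ (evl Y ▷ dual X) ≫ (λ_ (dual X)).hom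

/-- The (common left = right) pivotal monoidal constraint `X* ⊗ Y* ⟶ (Y ⊗ X)*`. -/
def mcon (X Y : C) : dual X ⊗ dual Y ⟶ dual (Y ⊗ X) :=
  (ρ_ (dual X ⊗ dual Y)).inv ≫ ((dual X ⊗ dual Y) ◁ coevl (Y ⊗ X)) ≫
    (α_ (dual X) (dual Y) ((Y ⊗ X) ⊗ dual (Y ⊗ X))).hom ≫
    (dual X ◁ (α_ (dual Y) (Y ⊗ X) (dual (Y ⊗ X))).inv) ≫
    (dual X ◁ (((α_ (dual Y) Y X).inv ≫ (evl Y ▷ X) ≫ (λ_ X).hom) ▷ dual (Y ⊗ X))) ≫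
    (α_ (dual X) X (dual (Y ⊗ X))).inv ≫ (evl X ▷ dual (Y ⊗ X)) ≫ (λ_ (dual (Y ⊗ X))).hom

/-- The left trace of an endomorphism. -/
def trl {X : C} (f : X ⟶ X) : 𝟙_ C ⟶ 𝟙_ C := coevr X ≫ (dual X ◁ f) ≫ evl X

/-- The right trace of an endomorphism. -/
def trr {X : C} (f : X ⟶ X) : 𝟙_ C ⟶ 𝟙_ C := coevl X ≫ (f ▷ dual X) ≫ evr X

/-- The left dimension of an object, as an endomorphism of the unit. -/
def diml (X : C) : 𝟙_ C ⟶ 𝟙_ C := trl (𝟙 X)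

/-- The right dimension of an object, as an endomorphism of the unit. -/
def dimr (X : C) : 𝟙_ C ⟶ 𝟙_ C := trr (𝟙 X)

/-- The permutation map `σ_{X,Y} : Hom(𝟙, X ⊗ Y) → Hom(𝟙, Y ⊗ X)`,
`α ↦ (ev_l X ⊗ id_{Y⊗X}) ∘ (id_{X*} ⊗ α ⊗ id_X) ∘ coev_r X`. -/
def sigmaMap (X Y : C) (a : 𝟙_ C ⟶ X ⊗ Y) : 𝟙_ C ⟶ Y ⊗ X :=
  coevr X ≫ (dual X ◁ (λ_ X).inv) ≫ (dual X ◁ (a ▷ X)) ≫ (dual X ◁ (α_ X Y X).hom) ≫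
    (α_ (dual X) X (Y ⊗ X)).inv ≫ (evl X ▷ (Y ⊗ X)) ≫ (λ_ (Y ⊗ X)).hom

end PivotalCat

/-- A pivotal category is spherical when left and right traces coincide. -/
class SphericalCat (C : Type u) [Category.{v} C] [MonoidalCategory C] [PivotalCat C] : Prop where
  tr_eq : ∀ {X : C} (f : X ⟶ X), PivotalCat.trl f = PivotalCat.trr f
/-- An object `X` of a `k`-linear category is simple if `λ ↦ λ • id_X` is a bijection
`k → End X`. -/
def IsSimpleObj (k : Type w) [CommRing k] {C : Type u} [Category.{v} C]
    [Preadditive C] [CategoryTheory.Linear k C] (X : C) : Prop :=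
  Function.Bijective fun a : k => a • 𝟙 X

/-- A monoidal `k`-category: the hom-sets are `k`-modules, composition and the monoidal
product are `k`-bilinear (all this is encoded in the instance parameters), and
`End(𝟙)` is free of rank one via `λ ↦ λ • id`. -/
class MonoidalKCat (k : Type w) [CommRing k] (C : Type u) [Category.{v} C]
    [Preadditive C] [CategoryTheory.Linear k C] [MonoidalCategory C]
    [MonoidalPreadditive C] [CategoryTheory.MonoidalLinear k C] : Prop where
  unit_free : Function.Bijective fun a : k => a • 𝟙 (𝟙_ C)

/-- The identification `End(𝟙) = k` of a monoidal `k`-category. -/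
noncomputable def toScalar (k : Type w) [CommRing k] {C : Type u} [Category.{v} C]
    [Preadditive C] [CategoryTheory.Linear k C] [MonoidalCategory C]
    [MonoidalPreadditive C] [CategoryTheory.MonoidalLinear k C] [MonoidalKCat k C]
    (f : 𝟙_ C ⟶ 𝟙_ C) : k :=
  (Equiv.ofBijective (fun a : k => a • 𝟙 (𝟙_ C))
    (MonoidalKCat.unit_free (k := k) (C := C))).symm f

/-- The left dimension of an object as an element of `k`. -/
noncomputable def sdiml (k : Type w) [CommRing k] {C : Type u} [Category.{v} C]
    [Preadditive C] [CategoryTheory.Linear k C] [MonoidalCategory C]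
    [MonoidalPreadditive C] [CategoryTheory.MonoidalLinear k C] [PivotalCat C]
    [MonoidalKCat k C] (X : C) : k :=
  toScalar k (PivotalCat.diml X)

/-- The right dimension of an object as an element of `k`. -/
noncomputable def sdimr (k : Type w) [CommRing k] {C : Type u} [Category.{v} C]
    [Preadditive C] [CategoryTheory.Linear k C] [MonoidalCategory C]
    [MonoidalPreadditive C] [CategoryTheory.MonoidalLinear k C] [PivotalCat C]
    [MonoidalKCat k C] (X : C) : k :=
  toScalar k (PivotalCat.dimr X)

/-- A pre-fusion category over `k`: a pivotal `k`-category in which every finite family of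
objects has a direct sum, every object is a finite direct sum of simple objects, and there
are no nonzero morphisms between non-isomorphic simple objects. -/
class PreFusionCat (k : Type w) [CommRing k] (C : Type u) [Category.{v} C]
    [Preadditive C] [CategoryTheory.Linear k C] [MonoidalCategory C]
    [MonoidalPreadditive C] [CategoryTheory.MonoidalLinear k C]
    [CategoryTheory.Limits.HasFiniteBiproducts C] [PivotalCat C] [MonoidalKCat k C] : Prop where
  semisimple : ∀ X : C, ∃ (n : ℕ) (obj : Fin n → C) (p : ∀ a, X ⟶ obj a) (q : ∀ a, obj a ⟶ X),
    (∀ a, IsSimpleObj k (obj a)) ∧ (∑ a, p a ≫ q a = 𝟙 X) ∧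
    (∀ a, q a ≫ p a = 𝟙 (obj a)) ∧ (∀ a b, a ≠ b → q a ≫ p b = 0)
  simple_hom_zero : ∀ {i j : C}, IsSimpleObj k i → IsSimpleObj k j →
    IsEmpty (i ≅ j) → ∀ f : i ⟶ j, f = 0

/-- A fusion category over `k`: a pre-fusion category with finitely many isomorphism
classes of simple objects. -/
class FusionCat (k : Type w) [CommRing k] (C : Type u) [Category.{v} C]
    [Preadditive C] [CategoryTheory.Linear k C] [MonoidalCategory C]
    [MonoidalPreadditive C] [CategoryTheory.MonoidalLinear k C]
    [CategoryTheory.Limits.HasFiniteBiproducts C] [PivotalCat C] [MonoidalKCat k C]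
    [PreFusionCat k C] : Prop where
  finitely_many_simples : ∃ S : Set C, S.Finite ∧
    ∀ i : C, IsSimpleObj k i → ∃ j ∈ S, Nonempty (i ≅ j)

/-- A representative set of simple objects: it contains the unit object, consists of simple
objects, and every simple object is isomorphic to exactly one of its elements. -/
def IsRepresentativeSet (k : Type w) [CommRing k] (C : Type u) [Category.{v} C]
    [Preadditive C] [CategoryTheory.Linear k C] [MonoidalCategory C] (I : Set C) : Prop :=
  (𝟙_ C) ∈ I ∧ (∀ i ∈ I, IsSimpleObj k i) ∧
    ∀ X : C, IsSimpleObj k X → ∃! i, i ∈ I ∧ Nonempty (X ≅ i)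

/-- The dimension of a fusion category with (finite) representative set `I` of simple
objects: `dim C = ∑_{i ∈ I} dim_l(i) · dim_r(i)`. -/
noncomputable def catDim (k : Type w) [CommRing k] {C : Type u} [Category.{v} C]
    [Preadditive C] [CategoryTheory.Linear k C] [MonoidalCategory C]
    [MonoidalPreadditive C] [CategoryTheory.MonoidalLinear k C] [PivotalCat C]
    [MonoidalKCat k C] (I : Finset C) : k :=
  ∑ i ∈ I, sdiml k i * sdimr k i

open PivotalCat in
/-- The averaging operator `π` on `Hom_C(A, B)` associated with half braidings `σ` of `A`
and `τ` of `B`: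
`π(f) = dim(C)⁻¹ · ∑_{i ∈ I} dim(i) · (ev_l i ⊗ id_B)(id_{i*} ⊗ τ_i)(id_{i*} ⊗ f ⊗ id_i)(σ_{i*} ⊗ id_i)(id_A ⊗ coev_r i)`. -/
noncomputable def piMap (k : Type w) [CommRing k] {C : Type u} [Category.{v} C]
    [Preadditive C] [CategoryTheory.Linear k C] [MonoidalCategory C]
    [MonoidalPreadditive C] [CategoryTheory.MonoidalLinear k C] [PivotalCat C]
    [MonoidalKCat k C] (I : Finset C) {A B : C}
    (σ : HalfBraiding A) (τ : HalfBraiding B) (f : A ⟶ B) : A ⟶ B :=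
  Ring.inverse (catDim k I) •
    ∑ i ∈ I, sdiml k i •
      ((ρ_ A).inv ≫ (A ◁ coevr i) ≫ (α_ A (dual i) i).inv ≫
        ((σ.β (dual i)).hom ▷ i) ≫ ((dual i ◁ f) ▷ i) ≫ (α_ (dual i) B i).hom ≫
        (dual i ◁ (τ.β i).hom) ≫ (α_ (dual i) i B).inv ≫ (evl i ▷ B) ≫ (λ_ B).hom)

namespace PiAux
open PivotalCat

variable {C : Type u} [Category.{v} C] [MonoidalCategory C] [PivotalCat C]

instance exL (X : C) : ExactPairing X (dual X) where
  coevaluation' := coevl X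
  evaluation' := evl X
  coevaluation_evaluation' := by
    have h := left_zigzag₂ X
    rw [Iso.inv_comp_eq] at h
    rw [Iso.eq_comp_inv]
    simpa using h
  evaluation_coevaluation' := by
    have h := left_zigzag₁ X
    rw [Iso.inv_comp_eq] at h
    rw [Iso.eq_comp_inv]
    simpa using h

instance exR (X : C) : ExactPairing (dual X) X where
  coevaluation' := coevr X
  evaluation' := evr X
  coevaluation_evaluation' := by
    have h := right_zigzag₁ X
    rw [Iso.inv_comp_eq] at h
    rw [Iso.eq_comp_inv]
    simpa using h
  evaluation_coevaluation' := by
    have h := right_zigzag₂ X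
    rw [Iso.inv_comp_eq] at h
    rw [Iso.eq_comp_inv]
    simpa using h

/-- scalar pairing lemma -/
theorem pairing_eq {X i j : C} (u : X ⟶ dual j ⊗ i) (v : dual j ⊗ i ⟶ X) :
    trr (tensorLeftHomEquiv i j (dual j) X v ≫ (tensorLeftHomEquiv X (dual j) j i).symm u) =
      coevl j ≫ j ◁ (tensorRightHomEquiv (dual j) i (dual i) X v ≫
        (tensorRightHomEquiv X (dual i) i (dual j)).symm u) ≫ evr j := by
  change coevl i ≫ (((λ_ _).inv ≫ coevl j ▷ _ ≫ (α_ _ _ _).hom ≫ _ ◁ v) ≫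
    (_ ◁ u ≫ (α_ _ _ _).inv ≫ evr j ▷ _ ≫ (λ_ _).hom)) ▷ _ ≫ evr i =
    coevl j ≫ j ◁ (((ρ_ _).inv ≫ _ ◁ coevl i ≫ (α_ _ _ _).inv ≫ v ▷ _) ≫
      u ▷ _ ≫ (α_ _ _ _).hom ≫ _ ◁ evr i ≫ (ρ_ _).hom) ≫ evr j
  calc
    _ = 𝟙 _ ⊗≫ (𝟙_ C ◁ coevl i ≫ coevl j ▷ (i ⊗ dual i)) ⊗≫ j ◁ (v ≫ u) ▷ dual i ⊗≫
        (evr j ▷ (i ⊗ dual i) ≫ 𝟙_ C ◁ evr i) ⊗≫ 𝟙 _ := by monoidal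
    _ = _ := by rw [whisker_exchange (coevl j) (coevl i), ← whisker_exchange (evr j) (evr i)]; monoidal

section
variable {A B : C} (σ : HalfBraiding A) (τ : HalfBraiding B) (f : A ⟶ B)

def Phi {X Y Z : C} (u : X ⟶ Y ⊗ Z) (v : Y ⊗ Z ⟶ X) : A ⊗ X ⟶ X ⊗ B :=
  A ◁ u ≫ (α_ A Y Z).inv ≫ ((σ.β Y).hom ▷ Z) ≫ ((Y ◁ f) ▷ Z) ≫ (α_ Y B Z).hom ≫
    (Y ◁ (τ.β Z).hom) ≫ (α_ Y Z B).inv ≫ v ▷ B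

def T (i : C) : A ⟶ B :=
  ((ρ_ A).inv ≫ (A ◁ coevr i) ≫ (α_ A (dual i) i).inv ≫
        ((σ.β (dual i)).hom ▷ i) ≫ ((dual i ◁ f) ▷ i) ≫ (α_ (dual i) B i).hom ≫
        (dual i ◁ (τ.β i).hom) ≫ (α_ (dual i) i B).inv ≫ (evl i ▷ B) ≫ (λ_ B).hom)

theorem Phi_dinat_left {X Y Y' Z : C} (u : X ⟶ Y ⊗ Z) (g : Y ⟶ Y') (v : Y' ⊗ Z ⟶ X) :
    Phi σ τ f (u ≫ g ▷ Z) v = Phi σ τ f u (g ▷ Z ≫ v) := by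
  have h := congrArg (fun t => t ▷ Z) (σ.naturality g)
  simp only [comp_whiskerRight] at h
  simp only [Phi, whiskerLeft_comp, comp_whiskerRight, Category.assoc]
  calc
    _ = A ◁ u ≫ (α_ A Y Z).inv ≫ ((A ◁ g) ▷ Z ≫ (σ.β Y').hom ▷ Z) ≫ ((Y' ◁ f) ▷ Z) ≫
      (α_ Y' B Z).hom ≫ (Y' ◁ (τ.β Z).hom) ≫ (α_ Y' Z B).inv ≫ v ▷ B := by simp
    _ = A ◁ u ≫ (α_ A Y Z).inv ≫ (σ.β Y).hom ▷ Z ≫ ((g ▷ A ≫ (Y' ◁ f)) ▷ Z) ≫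
      (α_ Y' B Z).hom ≫ (Y' ◁ (τ.β Z).hom) ≫ (α_ Y' Z B).inv ≫ v ▷ B := by rw [h]; simp
    _ = A ◁ u ≫ (α_ A Y Z).inv ≫ (σ.β Y).hom ▷ Z ≫ (Y ◁ f) ▷ Z ≫
      (α_ Y B Z).hom ≫ (g ▷ (B ⊗ Z) ≫ (Y' ◁ (τ.β Z).hom)) ≫ (α_ Y' Z B).inv ≫ v ▷ B := by
        rw [← whisker_exchange]; simp
    _ = _ := by rw [← whisker_exchange]; simp

theorem Phi_dinat_right {X Y Z Z' : C} (u : X ⟶ Y ⊗ Z) (g : Z ⟶ Z') (v : Y ⊗ Z' ⟶ X) :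
    Phi σ τ f (u ≫ Y ◁ g) v = Phi σ τ f u (Y ◁ g ≫ v) := by
  have h := congrArg (fun t => Y ◁ t) (τ.naturality g)
  simp only [whiskerLeft_comp] at h
  simp only [Phi, whiskerLeft_comp, comp_whiskerRight, Category.assoc]
  calc
    _ = A ◁ u ≫ (α_ A Y Z).inv ≫ ((A ⊗ Y) ◁ g ≫ (σ.β Y).hom ▷ Z') ≫ ((Y ◁ f) ▷ Z') ≫
      (α_ Y B Z').hom ≫ (Y ◁ (τ.β Z').hom) ≫ (α_ Y Z' B).inv ≫ v ▷ B := by simp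
    _ = A ◁ u ≫ (α_ A Y Z).inv ≫ (σ.β Y).hom ▷ Z ≫ ((Y ⊗ A) ◁ g ≫ ((Y ◁ f) ▷ Z')) ≫
      (α_ Y B Z').hom ≫ (Y ◁ (τ.β Z').hom) ≫ (α_ Y Z' B).inv ≫ v ▷ B := by
        rw [whisker_exchange]; simp
    _ = A ◁ u ≫ (α_ A Y Z).inv ≫ (σ.β Y).hom ▷ Z ≫ (Y ◁ f) ▷ Z ≫
      (α_ Y B Z).hom ≫ (Y ◁ B ◁ g ≫ (Y ◁ (τ.β Z').hom)) ≫ (α_ Y Z' B).inv ≫ v ▷ B := by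
        rw [whisker_exchange]; simp
    _ = _ := by rw [h]; simp

theorem T_left (X i : C) : (σ.β X).hom ≫ X ◁ T σ τ f i =
    Phi σ τ f (tensorRightHomEquiv X (dual i) i (X ⊗ dual i) (𝟙 _))
      ((tensorRightHomEquiv (X ⊗ dual i) i (dual i) X).symm (𝟙 _)) := by
  change _ = Phi σ τ f ((ρ_ _).inv ≫ _ ◁ coevr i ≫ (α_ _ _ _).inv ≫ 𝟙 _ ▷ _)
    (𝟙 _ ▷ _ ≫ (α_ _ _ _).hom ≫ _ ◁ evl i ≫ (ρ_ _).hom)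
  simp only [Phi, T, σ.monoidal]
  calc
    _ = 𝟙 _ ⊗≫ ((σ.β X).hom ▷ 𝟙_ C ≫ (X ⊗ A) ◁ coevr i) ⊗≫ X ◁ (σ.β (dual i)).hom ▷ i ⊗≫
      X ◁ dual i ◁ f ▷ i ⊗≫ X ◁ dual i ◁ (τ.β i).hom ⊗≫ X ◁ evl i ▷ B ⊗≫ 𝟙 _ := by
        monoidal
    _ = _ := by
        rw [← whisker_exchange]
        monoidal

theorem T_right (X j : C) : T σ τ f j ▷ X ≫ (τ.β X).hom =
    Phi σ τ f (tensorLeftHomEquiv X (dual j) j (j ⊗ X) (𝟙 _))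
      ((tensorLeftHomEquiv (j ⊗ X) j (dual j) X).symm (𝟙 _)) := by
  change _ = Phi σ τ f ((λ_ _).inv ≫ coevr j ▷ _ ≫ (α_ _ _ _).hom ≫ _ ◁ 𝟙 _)
    (_ ◁ 𝟙 _ ≫ (α_ _ _ _).inv ≫ evl j ▷ _ ≫ (λ_ _).hom)
  simp only [Phi, T, τ.monoidal]
  calc
    _ = 𝟙 _ ⊗≫ A ◁ coevr j ▷ X ⊗≫ (σ.β (dual j)).hom ▷ j ▷ X ⊗≫
      dual j ◁ f ▷ j ▷ X ⊗≫ dual j ◁ (τ.β j).hom ▷ X ⊗≫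
        (evl j ▷ (B ⊗ X) ≫ _ ◁ (τ.β X).hom) ⊗≫ 𝟙 _ := by
        monoidal
    _ = _ := by
        rw [← whisker_exchange]
        monoidal

theorem beta_unit : (τ.β (𝟙_ C)).hom = (ρ_ B).hom ≫ (λ_ B).inv := by
  have h := τ.naturality (λ_ (𝟙_ C)).hom
  rw [τ.monoidal] at h
  have h3 : B ◁ (λ_ (𝟙_ C)).hom ≫ (τ.β (𝟙_ C)).hom =
      ((α_ _ _ _).inv ≫ (τ.β (𝟙_ C)).hom ▷ 𝟙_ C ≫ (α_ _ _ _).hom ≫ (λ_ _).hom) ≫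
        (τ.β (𝟙_ C)).hom := by
    rw [h]; monoidal
  rw [cancel_mono] at h3
  have h4 : (τ.β (𝟙_ C)).hom = (ρ_ _).inv ≫ (α_ _ _ _).hom ≫ ((α_ _ _ _).inv ≫
    (τ.β (𝟙_ C)).hom ▷ 𝟙_ C ≫ (α_ _ _ _).hom ≫ (λ_ _).hom) ≫
      (λ_ _).inv ≫ (α_ _ _ _).inv ≫ (ρ_ _).hom := by monoidal
  rw [h4, ← h3]; monoidal

theorem T_center (i : C) (hf : ∀ X : C, (σ.β X).hom ≫ (X ◁ f) = (f ▷ X) ≫ (τ.β X).hom) :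
    T σ τ f i = f ≫ (ρ_ B).inv ≫ B ◁ diml i ≫ (ρ_ B).hom := by
  have h2 := beta_unit τ
  calc
    _ = (ρ_ A).inv ≫ (A ◁ coevr i) ≫ (α_ A (dual i) i).inv ≫
        (((σ.β (dual i)).hom ≫ (dual i ◁ f)) ▷ i) ≫ (α_ (dual i) B i).hom ≫
        (dual i ◁ (τ.β i).hom) ≫ (α_ (dual i) i B).inv ≫ (evl i ▷ B) ≫ (λ_ B).hom := by
          simp [T]
    _ = (ρ_ A).inv ≫ (A ◁ coevr i ≫ f ▷ (dual i ⊗ i)) ≫ 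
        (τ.β (dual i ⊗ i)).hom ≫ (evl i ▷ B) ≫ (λ_ B).hom := by
          rw [hf, τ.monoidal]; simp
    _ = _ := by
          rw [whisker_exchange, ← τ.naturality_assoc, h2]
          simp [diml, trl]
end

section lin
theorem lin_aux {k U V W P a b : Type*} [CommRing k] [AddCommGroup U] [Module k U]
    [AddCommGroup V] [Module k V] [AddCommGroup W] [Module k W] [AddCommGroup P] [Module k P]
    [Fintype a] [DecidableEq a] [Fintype b] [DecidableEq b]
    (F : U →ₗ[k] V →ₗ[k] W) (G : U →ₗ[k] V →ₗ[k] P) (e : P)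
    (he : ∀ c c' : k, c • e = c' • e → c = c') (di dj : k)
    (u : a → U) (v : a → V) (u' : b → U) (v' : b → V)
    (h1 : ∀ x y, G (u x) (v y) = if y = x then dj • e else 0)
    (h2 : ∀ x y, G (u' x) (v' y) = if y = x then di • e else 0)
    (hu : ∀ x, ∃ c : b → k, u x = ∑ y, c y • u' y)
    (hv : ∀ y, ∃ c : a → k, v' y = ∑ x, c x • v x) :
    di • ∑ x, F (u x) (v x) = dj • ∑ y, F (u' y) (v' y) := by
  choose M hM using hu
  choose N hN using hv
  have key : ∀ x y, di * M x y = dj * N y x := by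
    intro x y
    apply he
    have e1 : G (u x) (v' y) = (di * M x y) • e := by
      rw [hM]
      simp [h2, mul_smul, smul_comm di]
    have e2 : G (u x) (v' y) = (dj * N y x) • e := by
      rw [hN]
      simp [h1, mul_smul, smul_comm dj]
    rw [← e1, e2]
  calc
    _ = ∑ x, ∑ y, (di * M x y) • F (u' y) (v x) := by
      rw [Finset.smul_sum]
      refine Finset.sum_congr rfl fun x _ => ?_
      rw [hM]
      simp only [map_sum, map_smul, LinearMap.sum_apply, LinearMap.smul_apply, Finset.smul_sum,
        smul_smul]
    _ = ∑ y, ∑ x, (dj * N y x) • F (u' y) (v x) := by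
      rw [Finset.sum_comm]
      simp only [key]
    _ = _ := by
      rw [Finset.smul_sum]
      refine Finset.sum_congr rfl fun x _ => ?_
      rw [hN]
      simp only [map_sum, map_smul, Finset.smul_sum, smul_smul]
end lin

section
variable {k : Type w} [CommRing k] [Preadditive C] [CategoryTheory.Linear k C]
    [MonoidalPreadditive C] [CategoryTheory.MonoidalLinear k C]

variable (k) in
def tL (X Y Y' Z : C) [ExactPairing Y Y'] : (Y' ⊗ X ⟶ Z) ≃ₗ[k] (X ⟶ Y ⊗ Z) where
  __ := tensorLeftHomEquiv X Y Y' Z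
  map_add' f g := by simp [tensorLeftHomEquiv]
  map_smul' f g := by simp [tensorLeftHomEquiv]

variable (k) in
def tR (X Y Y' Z : C) [ExactPairing Y Y'] : (X ⊗ Y ⟶ Z) ≃ₗ[k] (X ⟶ Z ⊗ Y') where
  __ := tensorRightHomEquiv X Y Y' Z
  map_add' f g := by simp [tensorRightHomEquiv]
  map_smul' f g := by simp [tensorRightHomEquiv]

variable (k) in
def trrL (X : C) : (X ⟶ X) →ₗ[k] (𝟙_ C ⟶ 𝟙_ C) where
  toFun := trr
  map_add' f g := by simp [trr]
  map_smul' f g := by simp [trr]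

variable (k) in
def PhiL {A B : C} (σ : HalfBraiding A) (τ : HalfBraiding B) (f : A ⟶ B) (X Y Z : C) :
    (X ⟶ Y ⊗ Z) →ₗ[k] (Y ⊗ Z ⟶ X) →ₗ[k] (A ⊗ X ⟶ X ⊗ B) :=
  LinearMap.mk₂ k (Phi σ τ f) (by intros; simp [Phi]) (by intros; simp [Phi])
    (by intros; simp [Phi]) (by intros; simp [Phi])

variable (k) in
def pairL (X i j : C) :
    (X ⟶ dual j ⊗ i) →ₗ[k] (dual j ⊗ i ⟶ X) →ₗ[k] (𝟙_ C ⟶ 𝟙_ C) :=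
  LinearMap.mk₂ k (fun u v => trrL k _ (tL k i j (dual j) X v ≫ (tL k X (dual j) j i).symm u))
    (by intros; simp) (by intros; simp)
    (by intros; simp) (by intros; simp)

theorem pairL_left {X i j : C} (p : j ⊗ X ⟶ i) (q : i ⟶ j ⊗ X) :
    pairL k X i j (tL k X (dual j) j i p) ((tL k i j (dual j) X).symm q) = trr (q ≫ p) := by
  simp [pairL]; rfl

theorem pairL_right {X i j : C} (p : X ⊗ dual i ⟶ dual j) (q : dual j ⟶ X ⊗ dual i) :
    pairL k X i j (tR k X (dual i) i (dual j) p) ((tR k (dual j) i (dual i) X).symm q) =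
      coevl j ≫ j ◁ (q ≫ p) ≫ evr j := by
  refine (pairing_eq _ _).trans ?_
  congr 4
  · exact (tR k (dual j) i (dual i) X).apply_symm_apply q
  · exact (tR k X (dual i) i (dual j)).symm_apply_apply p

/-- Reduction of hom-spaces between duals. -/
theorem dual_hom (i j : C) : ∃ E : (j ⟶ i) ≃ₗ[k] (dual i ⟶ dual j),
    ∀ h : i = j, E (eqToHom h.symm) = eqToHom (congrArg dual h) := by
  let r : (j ⟶ i) ≃ₗ[k] (j ⟶ i ⊗ 𝟙_ C) := 
    CategoryTheory.Linear.homCongr k (Iso.refl j) (ρ_ i).symm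
  let l : (dual i ⟶ 𝟙_ C ⊗ dual j) ≃ₗ[k] (dual i ⟶ dual j) := 
    CategoryTheory.Linear.homCongr k (Iso.refl _) (λ_ _)
  refine ⟨r ≪≫ₗ (tL k j i (dual i) (𝟙_ C)).symm ≪≫ₗ tR k (dual i) j (dual j) (𝟙_ C) ≪≫ₗ l, ?_⟩
  rintro rfl
  have h := left_zigzag₂ i
  simp [r, l, CategoryTheory.Linear.homCongr]
  change ((ρ_ _).inv ≫ _ ◁ coevl i ≫ (α_ _ _ _).inv ≫
   (_ ◁ (ρ_ i).inv ≫ (α_ _ _ _).inv ≫ evl i ▷ _ ≫ (λ_ _).hom) ▷ _) ≫ _ = _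
  rw [← h]
  monoidal

theorem simple_dual {s : C} (hs : IsSimpleObj k s) : IsSimpleObj k (dual s) := by
  obtain ⟨E, hE⟩ := dual_hom (k := k) s s
  have hE := hE rfl
  simp only [eqToHom_refl] at hE
  have : (fun a : k => a • 𝟙 (dual s)) = E ∘ fun a : k => a • 𝟙 s := by
    ext a; simp [hE]
  unfold IsSimpleObj
  rw [this]
  exact E.bijective.comp hs

theorem iso_dual {s j : C} (e : dual s ≅ j) : Nonempty (s ≅ dual j) :=
  ⟨rightDualIso (exR s) (exactPairingCongrLeft e)⟩

/-- Decomposition of an object along a family of simples. -/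
theorem decomp [HasFiniteBiproducts C] [MonoidalKCat k C] [PreFusionCat k C]
    (I : Finset C) (F : C → C)
    (ha : ∀ s, IsSimpleObj k s → ∃ j ∈ I, Nonempty (s ≅ F j))
    (hb : ∀ i ∈ I, ∀ j ∈ I, i ≠ j → ∀ f : F i ⟶ F j, f = 0)
    (hc : ∀ i ∈ I, ∀ f : F i ⟶ F i, ∃ c : k, f = c • 𝟙 _) (Y : C) :
    ∃ (S : C → Type) (_ : ∀ j, Fintype (S j)) (_ : ∀ j, DecidableEq (S j))
      (p : ∀ j, S j → (Y ⟶ F j)) (q : ∀ j, S j → (F j ⟶ Y)),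
      (∑ j ∈ I, ∑ a, p j a ≫ q j a = 𝟙 Y) ∧
      (∀ j a b, q j a ≫ p j b = if a = b then 𝟙 _ else 0) ∧
      (∀ j ∈ I, ∀ f : Y ⟶ F j, ∃ c : S j → k, f = ∑ a, c a • p j a) ∧
      (∀ j ∈ I, ∀ f : F j ⟶ Y, ∃ c : S j → k, f = ∑ a, c a • q j a) := by
  classical
  obtain ⟨n, obj, p, q, hs, h1, h2, h3⟩ := PreFusionCat.semisimple (k := k) Y
  choose J hJ e using fun a => ha (obj a) (hs a)
  replace e := fun a => (e a).some
  let P : ∀ j, {a : Fin n // J a = j} → (Y ⟶ F j) :=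
    fun j a => p a.1 ≫ (e a.1).hom ≫ eqToHom (congrArg F a.2)
  let Q : ∀ j, {a : Fin n // J a = j} → (F j ⟶ Y) :=
    fun j a => eqToHom (congrArg F a.2.symm) ≫ (e a.1).inv ≫ q a.1
  have hsum : ∑ j ∈ I, ∑ a, P j a ≫ Q j a = 𝟙 Y := by
    rw [← h1]
    have : ∀ j, ∑ a, P j a ≫ Q j a = ∑ a with J a = j, p a ≫ q a := by
      intro j
      rw [← Finset.sum_subtype_of_mem (p := fun a => J a = j) (f := fun a => p a ≫ q a) (by simp)]
      refine Finset.sum_bij (fun a _ => a) ?_ ?_ ?_ ?_ <;> simp [P, Q]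
    simp only [this]
    exact Finset.sum_fiberwise_of_maps_to (fun a _ => hJ a) _
  refine ⟨fun j => {a : Fin n // J a = j}, fun j => inferInstance, fun j => inferInstance,
    P, Q, hsum, ?_, ?_, ?_⟩
  · intro j a b
    split_ifs with h
    · subst h
      simp [P, Q, reassoc_of% (h2 a.1)]
    · have := h3 a.1 b.1 (fun h' => h (Subtype.ext h'))
      simp [P, Q, reassoc_of% this]
  · intro j hj f
    choose c hcc using fun a => hc j hj (Q j a ≫ f)
    refine ⟨c, ?_⟩
    calc f = (∑ i ∈ I, ∑ a, P i a ≫ Q i a) ≫ f := by rw [hsum]; simp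
      _ = ∑ i ∈ I, ∑ a, P i a ≫ Q i a ≫ f := by simp [Preadditive.sum_comp]
      _ = ∑ a, P j a ≫ Q j a ≫ f := by
        refine Finset.sum_eq_single j ?_ (fun h => absurd hj h)
        intro i hi hij
        refine Finset.sum_eq_zero fun a _ => ?_
        rw [hb i hi j hj hij (Q i a ≫ f)]; simp
      _ = _ := by simp [hcc]
  · intro j hj f
    choose c hcc using fun a => hc j hj (f ≫ P j a)
    refine ⟨c, ?_⟩
    calc f = f ≫ (∑ i ∈ I, ∑ a, P i a ≫ Q i a) := by rw [hsum]; simp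
      _ = ∑ i ∈ I, ∑ a, (f ≫ P i a) ≫ Q i a := by simp [Preadditive.comp_sum]
      _ = ∑ a, (f ≫ P j a) ≫ Q j a := by
        refine Finset.sum_eq_single j ?_ (fun h => absurd hj h)
        intro i hi hij
        refine Finset.sum_eq_zero fun a _ => ?_
        rw [hb j hj i hi (Ne.symm hij) (f ≫ P i a)]; simp
      _ = _ := by simp [hcc]

theorem toScalar_smul [MonoidalKCat k C] (f : 𝟙_ C ⟶ 𝟙_ C) : toScalar k f • 𝟙 (𝟙_ C) = f :=
  (Equiv.ofBijective (fun a : k => a • 𝟙 (𝟙_ C))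
    (MonoidalKCat.unit_free (k := k) (C := C))).apply_symm_apply f

variable (k) in
theorem central [HasFiniteBiproducts C] [MonoidalKCat k C] [PreFusionCat k C]
    (I : Finset C) (hI : IsRepresentativeSet k C ↑I)
    {A B : C} (σ : HalfBraiding A) (τ : HalfBraiding B) (f : A ⟶ B) (X : C) :
    (σ.β X).hom ≫ X ◁ (∑ i ∈ I, sdimr k i • T σ τ f i) =
      (∑ i ∈ I, sdimr k i • T σ τ f i) ▷ X ≫ (τ.β X).hom := by
  obtain ⟨-, hI1, hI2⟩ := hI
  have ha : ∀ s, IsSimpleObj k s → ∃ j ∈ I, Nonempty (s ≅ j) := by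
    intro s hs
    obtain ⟨j, ⟨hj, hj'⟩, -⟩ := hI2 s hs
    exact ⟨j, hj, hj'⟩
  have hb : ∀ i ∈ I, ∀ j ∈ I, i ≠ j → ∀ f : i ⟶ j, f = 0 := by
    intro i hi j hj hij
    refine PreFusionCat.simple_hom_zero (k := k) (hI1 i hi) (hI1 j hj) ⟨fun e => hij ?_⟩
    exact (hI2 i (hI1 i hi)).unique ⟨hi, ⟨Iso.refl _⟩⟩ ⟨hj, ⟨e⟩⟩
  have hc : ∀ i ∈ I, ∀ f : i ⟶ i, ∃ c : k, f = c • 𝟙 _ := by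
    intro i hi f
    obtain ⟨c, hc⟩ := (hI1 i hi).2 f
    exact ⟨c, hc.symm⟩
  have ha' : ∀ s, IsSimpleObj k s → ∃ j ∈ I, Nonempty (s ≅ dual j) := by
    intro s hs
    obtain ⟨j, hj, ⟨e⟩⟩ := ha _ (simple_dual hs)
    exact ⟨j, hj, iso_dual e⟩
  have hb' : ∀ i ∈ I, ∀ j ∈ I, i ≠ j → ∀ f : dual i ⟶ dual j, f = 0 := by
    intro i hi j hj hij f
    obtain ⟨E, -⟩ := dual_hom (k := k) i j
    rw [← E.apply_symm_apply f, hb j hj i hi hij.symm (E.symm f), map_zero]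
  have hc' : ∀ i ∈ I, ∀ f : dual i ⟶ dual i, ∃ c : k, f = c • 𝟙 _ := by
    intro i hi f
    obtain ⟨c, hc⟩ := (simple_dual (hI1 i hi)).2 f
    exact ⟨c, hc.symm⟩
  choose S fS dS p q hpq hqp hp hq using fun Y => decomp (k := k) I (fun j => j) ha hb hc Y
  choose S' fS' dS' p' q' hpq' hqp' hp' hq' using fun Y => decomp (k := k) I dual ha' hb' hc' Y
  have hl : ∀ i, (σ.β X).hom ≫ X ◁ T σ τ f i = ∑ j ∈ I, ∑ a : S' (X ⊗ dual i) j,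
      PhiL k σ τ f X (dual j) i (tR k X (dual i) i (dual j) (p' _ j a))
        ((tR k (dual j) i (dual i) X).symm (q' _ j a)) := by
    intro i
    rw [T_left]
    have e1 : (tensorRightHomEquiv (X ⊗ dual i) i (dual i) X).symm (𝟙 _) =
        ∑ j ∈ I, ∑ a : S' (X ⊗ dual i) j, p' _ j a ▷ i ≫
          (tensorRightHomEquiv (dual j) i (dual i) X).symm (q' _ j a) := by
      rw [← hpq' (X ⊗ dual i)]
      change (tR k (X ⊗ dual i) i (dual i) X).symm _ = _
      simp only [map_sum]
      refine Finset.sum_congr rfl fun j _ => Finset.sum_congr rfl fun a _ => ?_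
      exact tensorRightHomEquiv_symm_naturality _ _
    rw [e1]
    change PhiL k σ τ f _ _ _ _ _ = _
    simp only [map_sum]
    refine Finset.sum_congr rfl fun j _ => Finset.sum_congr rfl fun a _ => ?_
    refine (Phi_dinat_left σ τ f _ _ _).symm.trans ?_
    rw [← tensorRightHomEquiv_naturality, Category.id_comp]
    rfl
  have hr : ∀ j, T σ τ f j ▷ X ≫ (τ.β X).hom = ∑ i ∈ I, ∑ a : S (j ⊗ X) i,
      PhiL k σ τ f X (dual j) i (tL k X (dual j) j i (p _ i a))
        ((tL k i j (dual j) X).symm (q _ i a)) := by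
    intro j
    rw [T_right]
    have e1 : (tensorLeftHomEquiv (j ⊗ X) j (dual j) X).symm (𝟙 _) =
        ∑ i ∈ I, ∑ a : S (j ⊗ X) i, dual j ◁ p _ i a ≫
          (tensorLeftHomEquiv i j (dual j) X).symm (q _ i a) := by
      rw [← hpq (j ⊗ X)]
      change (tL k (j ⊗ X) j (dual j) X).symm _ = _
      simp only [map_sum]
      refine Finset.sum_congr rfl fun j _ => Finset.sum_congr rfl fun a _ => ?_
      exact tensorLeftHomEquiv_symm_naturality _ _
    rw [e1]
    change PhiL k σ τ f _ _ _ _ _ = _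
    simp only [map_sum]
    refine Finset.sum_congr rfl fun j _ => Finset.sum_congr rfl fun a _ => ?_
    refine (Phi_dinat_right σ τ f _ _ _).symm.trans ?_
    rw [← tensorLeftHomEquiv_naturality, Category.id_comp]
    rfl
  have key : ∀ i ∈ I, ∀ j ∈ I,
      sdimr k i • ∑ a : S' (X ⊗ dual i) j,
        PhiL k σ τ f X (dual j) i (tR k X (dual i) i (dual j) (p' _ j a))
        ((tR k (dual j) i (dual i) X).symm (q' _ j a)) =
      sdimr k j • ∑ a : S (j ⊗ X) i,
      PhiL k σ τ f X (dual j) i (tL k X (dual j) j i (p _ i a))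
        ((tL k i j (dual j) X).symm (q _ i a)) := by
    intro i hi j hj
    refine lin_aux (PhiL k σ τ f X (dual j) i) (pairL k X i j) (𝟙 (𝟙_ C))
      (fun c c' h => (MonoidalKCat.unit_free (k := k) (C := C)).1 h) _ _
      (fun a => tR k X (dual i) i (dual j) (p' _ j a))
      (fun a => (tR k (dual j) i (dual i) X).symm (q' _ j a))
      (fun a => tL k X (dual j) j i (p _ i a))
      (fun a => (tL k i j (dual j) X).symm (q _ i a)) ?_ ?_ ?_ ?_
    · intro x y
      rw [pairL_right, hqp', sdimr, toScalar_smul]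
      split_ifs <;> simp [dimr, trr]
    · intro x y
      rw [pairL_left, hqp, sdimr, toScalar_smul]
      split_ifs <;> simp [dimr, trr]
    · intro x
      obtain ⟨c, hc⟩ := hp (j ⊗ X) i hi
        ((tL k X (dual j) j i).symm (tR k X (dual i) i (dual j) (p' _ j x)))
      refine ⟨c, ?_⟩
      rw [LinearEquiv.symm_apply_eq] at hc
      simpa using hc
    · intro x
      obtain ⟨c, hc⟩ := hq' (X ⊗ dual i) j hj
        (tR k (dual j) i (dual i) X ((tL k i j (dual j) X).symm (q _ i x)))
      refine ⟨c, ?_⟩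
      rw [← LinearEquiv.eq_symm_apply] at hc
      simpa using hc
  calc
    _ = ∑ i ∈ I, sdimr k i • ((σ.β X).hom ≫ X ◁ T σ τ f i) := by
      simp [whiskerLeft_sum, Preadditive.comp_sum]
    _ = ∑ j ∈ I, sdimr k j • (T σ τ f j ▷ X ≫ (τ.β X).hom) := by
      simp only [hl, hr, Finset.smul_sum (s := I)]
      rw [Finset.sum_comm]
      exact Finset.sum_congr rfl fun j hj => Finset.sum_congr rfl fun i hi => key i hi j hj
    _ = _ := by
      simp [sum_whiskerRight, Preadditive.sum_comp]

end
end PiAux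

open PivotalCat in
/-- Lemma 10.1 (Müger): let `C` be a spherical fusion category over `k` with
representative set `I` of simple objects and `dim C` invertible in `k`.  For half
braidings `(A, σ)` and `(B, τ)` of `C`, the operator `π` on `Hom_C(A, B)` is an
idempotent whose image is exactly
`Hom_{Z(C)}((A,σ), (B,τ)) = {f | (id_X ⊗ f) σ_X = τ_X (f ⊗ id_X) for all X}`. -/
theorem piMap_idempotent_range_center (k : Type w) [CommRing k] (C : Type u)
    [Category.{v} C] [Preadditive C] [CategoryTheory.Linear k C] [MonoidalCategory C]
    [MonoidalPreadditive C] [CategoryTheory.MonoidalLinear k C]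
    [CategoryTheory.Limits.HasFiniteBiproducts C] [PivotalCat C] [MonoidalKCat k C]
    [PreFusionCat k C] [FusionCat k C] [SphericalCat C]
    (I : Finset C) (hI : IsRepresentativeSet k C ↑I) (hdim : IsUnit (catDim k I))
    {A B : C} (σ : HalfBraiding A) (τ : HalfBraiding B) :
    (∀ f : A ⟶ B, piMap k I σ τ (piMap k I σ τ f) = piMap k I σ τ f) ∧
    Set.range (piMap k I σ τ) =
      {f : A ⟶ B | ∀ X : C, (σ.β X).hom ≫ (X ◁ f) = (f ▷ X) ≫ (τ.β X).hom} := by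
  have hlr : ∀ i : C, sdiml k i = sdimr k i := fun i => by
    rw [sdiml, sdimr, diml, dimr, SphericalCat.tr_eq]
  have hpi : ∀ f : A ⟶ B, piMap k I σ τ f =
      Ring.inverse (catDim k I) • ∑ i ∈ I, sdimr k i • PiAux.T σ τ f i := by
    intro f
    simp only [← hlr]
    rfl
  have hcen : ∀ f : A ⟶ B, ∀ X : C, (σ.β X).hom ≫ (X ◁ piMap k I σ τ f) =
      (piMap k I σ τ f ▷ X) ≫ (τ.β X).hom := by
    intro f X
    rw [hpi]
    simp [PiAux.central k I hI σ τ f X]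
  have hfix : ∀ f : A ⟶ B, (∀ X : C, (σ.β X).hom ≫ (X ◁ f) = (f ▷ X) ≫ (τ.β X).hom) →
      piMap k I σ τ f = f := by
    intro f hf
    have hT : ∀ i, PiAux.T σ τ f i = sdiml k i • f := by
      intro i
      rw [PiAux.T_center σ τ f i hf, ← PiAux.toScalar_smul (k := k) (diml i)]
      simp [sdiml]
    rw [hpi]
    simp only [hT, smul_smul, ← Finset.sum_smul]
    have : ∑ i ∈ I, sdimr k i * sdiml k i = catDim k I :=
      Finset.sum_congr rfl fun i _ => mul_comm _ _
    rw [this, Ring.inverse_mul_cancel _ hdim, one_smul]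
  refine ⟨fun f => hfix _ (hcen f), Set.ext fun f => ⟨?_, fun hf => ⟨f, hfix f hf⟩⟩⟩
  rintro ⟨g, rfl⟩
  exact hcen g
end

section
/- Every pre-fusion category C over a commutative ring k is non-degenerate: for every object X of C, the k-bilinear form ω_X : Hom(𝟙, X*) ⊗ Hom(𝟙, X) → k, α ⊗ β ↦ ev_l(X) ∘ (α ⊗ β), is non-degenerate. -/
open CategoryTheory CategoryTheory.Limits MonoidalCategory

universe v u w

/-- A pairing `ω : M × N → k` of `k`-modules is non-degenerate if it admits an inverse
copairing: finite families `(a_i)` in `N` and `(b_i)` in `M` (representing an element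
`Ω(1) = ∑ a_i ⊗ b_i` of `N ⊗ M`) such that `(id_N ⊗ ω)(Ω ⊗ id_N) = id_N` and
`(ω ⊗ id_M)(id_M ⊗ Ω) = id_M`. -/
def IsNondegeneratePairing (k : Type w) [CommRing k] {M N : Type*}
    [AddCommMonoid M] [Module k M] [AddCommMonoid N] [Module k N]
    (ω : M → N → k) : Prop :=
  ∃ (n : ℕ) (a : Fin n → N) (b : Fin n → M),
    (∀ y : N, ∑ i, ω (b i) y • a i = y) ∧ (∀ x : M, ∑ i, ω x (a i) • b i = x)

/-- The evaluation pairing `ω_X : Hom(𝟙, X*) × Hom(𝟙, X) → k`,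
`(α, β) ↦ ev_l X ∘ (α ⊗ β)`. -/
noncomputable def omegaX (k : Type w) [CommRing k] {C : Type u} [Category.{v} C]
    [Preadditive C] [CategoryTheory.Linear k C] [MonoidalCategory C]
    [MonoidalPreadditive C] [CategoryTheory.MonoidalLinear k C] [PivotalCat C]
    [MonoidalKCat k C] (X : C) :
    (𝟙_ C ⟶ PivotalCat.dual X) → (𝟙_ C ⟶ X) → k :=
  fun a b => toScalar k ((λ_ (𝟙_ C)).inv ≫ (a ⊗ₘ b) ≫ PivotalCat.evl X)

section Aux
open PivotalCat

variable {C : Type u} [Category.{v} C] [MonoidalCategory C] [PivotalCat C]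

/-- Bending `𝟙 ⟶ X*` to `X ⟶ 𝟙`. -/
def bendDown (X : C) (x : 𝟙_ C ⟶ dual X) : X ⟶ 𝟙_ C :=
  (λ_ X).inv ≫ (x ▷ X) ≫ evl X

/-- Bending `X ⟶ 𝟙` to `𝟙 ⟶ X*`. -/
def bendUp (X : C) (f : X ⟶ 𝟙_ C) : 𝟙_ C ⟶ dual X :=
  coevl X ≫ (f ▷ dual X) ≫ (λ_ (dual X)).hom

theorem bendDown_bendUp (X : C) (f : X ⟶ 𝟙_ C) : bendDown X (bendUp X f) = f := by
  have h := left_zigzag₁ X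
  calc bendDown X (bendUp X f)
      = (λ_ X).inv ≫ (coevl X ▷ X) ≫ (α_ X (dual X) X).hom ≫
          (f ▷ (dual X ⊗ X) ≫ (𝟙_ C) ◁ evl X) ≫ (λ_ _).hom := by
        simp only [bendDown, bendUp]; monoidal
    _ = ((λ_ X).inv ≫ (coevl X ▷ X) ≫ (α_ X (dual X) X).hom ≫ (X ◁ evl X) ≫ (ρ_ X).hom) ≫ f := by
        rw [← whisker_exchange]; monoidal
    _ = f := by rw [h, Category.id_comp]

theorem bendUp_bendDown (X : C) (x : 𝟙_ C ⟶ dual X) : bendUp X (bendDown X x) = x := by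
  have h := left_zigzag₂ X
  calc bendUp X (bendDown X x)
      = (λ_ _).inv ≫ ((𝟙_ C) ◁ coevl X ≫ x ▷ (X ⊗ dual X)) ≫ (α_ (dual X) X (dual X)).inv ≫
          (evl X ▷ dual X) ≫ (λ_ (dual X)).hom := by
        simp only [bendDown, bendUp]; monoidal
    _ = x ≫ ((ρ_ (dual X)).inv ≫ (dual X ◁ coevl X) ≫ (α_ (dual X) X (dual X)).inv ≫
      (evl X ▷ dual X) ≫ (λ_ (dual X)).hom) := by
        rw [whisker_exchange]; monoidal
    _ = x := by rw [h, Category.comp_id]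

theorem pairing_eq (X : C) (x : 𝟙_ C ⟶ dual X) (y : 𝟙_ C ⟶ X) :
    (λ_ (𝟙_ C)).inv ≫ (x ⊗ₘ y) ≫ evl X = y ≫ bendDown X x := by
  rw [tensorHom_def', bendDown]
  simp

end Aux

theorem toScalar_smul (k : Type w) [CommRing k] {C : Type u} [Category.{v} C]
    [Preadditive C] [CategoryTheory.Linear k C] [MonoidalCategory C]
    [MonoidalPreadditive C] [CategoryTheory.MonoidalLinear k C] [MonoidalKCat k C]
    (f : 𝟙_ C ⟶ 𝟙_ C) : toScalar k f • 𝟙 (𝟙_ C) = f :=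
  (Equiv.ofBijective (fun a : k => a • 𝟙 (𝟙_ C))
    (MonoidalKCat.unit_free (k := k) (C := C))).apply_symm_apply f

/-- Every pre-fusion category over a commutative ring `k` is non-degenerate: for every
object `X`, the pairing `ω_X : Hom(𝟙, X*) × Hom(𝟙, X) → k`, `(α, β) ↦ ev_l X ∘ (α ⊗ β)`,
is non-degenerate. -/
theorem preFusion_nondegenerate (k : Type w) [CommRing k] (C : Type u)
    [Category.{v} C] [Preadditive C] [CategoryTheory.Linear k C] [MonoidalCategory C]
    [MonoidalPreadditive C] [CategoryTheory.MonoidalLinear k C]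
    [CategoryTheory.Limits.HasFiniteBiproducts C] [PivotalCat C] [MonoidalKCat k C]
    [PreFusionCat k C] (X : C) :
    IsNondegeneratePairing k (omegaX k X) := by
  obtain ⟨n, obj, p, q, hs, hsum, -, -⟩ := PreFusionCat.semisimple (k := k) X
  have hunit : IsSimpleObj k (𝟙_ C) := MonoidalKCat.unit_free
  have key : ∀ a, ∃ (f : X ⟶ 𝟙_ C) (g : 𝟙_ C ⟶ X),
      (∀ y : 𝟙_ C ⟶ X, y ≫ p a ≫ q a = (y ≫ f) ≫ g) ∧
      (∀ x : X ⟶ 𝟙_ C, (p a ≫ q a) ≫ x = f ≫ (g ≫ x)) := by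
    intro a
    by_cases h : Nonempty (obj a ≅ 𝟙_ C)
    · obtain ⟨e⟩ := h
      exact ⟨p a ≫ e.hom, e.inv ≫ q a, fun y => by simp, fun x => by simp⟩
    · refine ⟨0, 0, fun y => ?_, fun x => ?_⟩
      · have : y ≫ p a = 0 := PreFusionCat.simple_hom_zero (k := k) hunit (hs a)
          ⟨fun e => h ⟨e.symm⟩⟩ _
        rw [← Category.assoc, this]; simp
      · have : q a ≫ x = 0 := PreFusionCat.simple_hom_zero (k := k) (hs a) hunit
          ⟨fun e => h ⟨e⟩⟩ _
        rw [Category.assoc, this]; simp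
  choose f g hfg hgf using key
  refine ⟨n, g, fun a => bendUp X (f a), fun y => ?_, fun x => ?_⟩
  · have h1 : ∀ a, omegaX k X (bendUp X (f a)) y • g a = y ≫ p a ≫ q a := by
      intro a
      rw [hfg, omegaX, pairing_eq, bendDown_bendUp]
      conv_rhs => rw [← toScalar_smul k (y ≫ f a)]
      simp
    simp only [h1]
    rw [← Preadditive.comp_sum, hsum, Category.comp_id]
  · have h1 : ∀ a, omegaX k X x (g a) • bendUp X (f a)
        = bendUp X ((p a ≫ q a) ≫ bendDown X x) := by
      intro a
      rw [hgf, omegaX, pairing_eq]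
      conv_rhs => rw [← toScalar_smul k (g a ≫ bendDown X x)]
      simp [bendUp]
    simp only [h1]
    have h2 : ∑ a, bendUp X ((p a ≫ q a) ≫ bendDown X x)
        = bendUp X ((∑ a, p a ≫ q a) ≫ bendDown X x) := by
      simp only [bendUp, Preadditive.sum_comp, sum_whiskerRight, Preadditive.comp_sum]
    rw [h2, hsum, Category.id_comp, bendUp_bendDown]
end

section
/- In a pre-fusion category over a commutative ring k, both the left dimension dim_l(i) and the right dimension dim_r(i) of any simple object i are invertible elements of k. -/
open CategoryTheory CategoryTheory.Limits MonoidalCategory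

universe v u w

section Helpers

variable {k : Type w} [CommRing k] {C : Type u} [Category.{v} C]
    [Preadditive C] [CategoryTheory.Linear k C] [MonoidalCategory C]
    [MonoidalPreadditive C] [CategoryTheory.MonoidalLinear k C]

theorem aux_simple {i X Y : C} (hi : IsSimpleObj k i) (a : X ≅ i) (b : i ≅ Y) (f : X ⟶ Y) :
    ∃ t : k, f = t • (a.hom ≫ b.hom) := by
  obtain ⟨t, ht⟩ := hi.2 (a.inv ≫ f ≫ b.inv)
  refine ⟨t, ?_⟩
  have h2 : a.hom ≫ (t • 𝟙 i) ≫ b.hom = f := by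
    have ht' : t • 𝟙 i = a.inv ≫ f ≫ b.inv := ht
    rw [ht']; simp
  rw [← h2]; simp

/-- coevaluation generates, right adjunction -/
theorem aux_coev_right {i j : C} [ExactPairing i j] (hi : IsSimpleObj k i)
    (f : 𝟙_ C ⟶ i ⊗ j) : ∃ t : k, f = t • η_ i j := by
  obtain ⟨t, ht⟩ := aux_simple hi (λ_ i) (Iso.refl i) ((tensorRightHomEquiv (𝟙_ C) i j i).symm f)
  refine ⟨t, ?_⟩
  rw [Equiv.symm_apply_eq] at ht
  rw [ht]
  simp [tensorRightHomEquiv, unitors_equal, unitors_inv_equal]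

theorem aux_ev_right {i j : C} [ExactPairing j i] (hi : IsSimpleObj k i)
    (f : i ⊗ j ⟶ 𝟙_ C) : ∃ t : k, f = t • ε_ j i := by
  obtain ⟨t, ht⟩ := aux_simple hi (Iso.refl i) (λ_ i).symm ((tensorRightHomEquiv i j i (𝟙_ C)) f)
  refine ⟨t, ?_⟩
  rw [← Equiv.eq_symm_apply] at ht
  rw [ht]
  simp [tensorRightHomEquiv, unitors_equal, unitors_inv_equal]

theorem aux_coev_left {i j : C} [ExactPairing j i] (hi : IsSimpleObj k i)
    (f : 𝟙_ C ⟶ j ⊗ i) : ∃ t : k, f = t • η_ j i := by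
  obtain ⟨t, ht⟩ := aux_simple hi (ρ_ i) (Iso.refl i) ((tensorLeftHomEquiv (𝟙_ C) j i i).symm f)
  refine ⟨t, ?_⟩
  rw [Equiv.symm_apply_eq] at ht
  rw [ht]
  simp [tensorLeftHomEquiv, unitors_equal, unitors_inv_equal]

theorem aux_ev_left {i j : C} [ExactPairing i j] (hi : IsSimpleObj k i)
    (f : j ⊗ i ⟶ 𝟙_ C) : ∃ t : k, f = t • ε_ i j := by
  obtain ⟨t, ht⟩ := aux_simple hi (Iso.refl i) (ρ_ i).symm ((tensorLeftHomEquiv i i j (𝟙_ C)) f)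
  refine ⟨t, ?_⟩
  rw [← Equiv.eq_symm_apply] at ht
  rw [ht]
  simp [tensorLeftHomEquiv, unitors_equal, unitors_inv_equal]

theorem aux_unit [CategoryTheory.Limits.HasFiniteBiproducts C] [PivotalCat C] [MonoidalKCat k C]
    [PreFusionCat k C] {X : C} (c : 𝟙_ C ⟶ X) (e : X ⟶ 𝟙_ C)
    (hc : ∀ f : 𝟙_ C ⟶ X, ∃ t : k, f = t • c) (he : ∀ f : X ⟶ 𝟙_ C, ∃ t : k, f = t • e)
    (h0 : c = 0 → Subsingleton k) : IsUnit (toScalar k (c ≫ e)) := by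
  have h1 : IsSimpleObj k (𝟙_ C) := MonoidalKCat.unit_free
  have hs : toScalar k (c ≫ e) • 𝟙 (𝟙_ C) = c ≫ e :=
    (Equiv.ofBijective (fun a : k => a • 𝟙 (𝟙_ C))
      (MonoidalKCat.unit_free (k := k) (C := C))).apply_symm_apply (c ≫ e)
  obtain ⟨n, obj, p, q, hsimp, hsum, hqp, -⟩ := PreFusionCat.semisimple (k := k) X
  by_cases hex : ∃ a, Nonempty (𝟙_ C ≅ obj a)
  · obtain ⟨a, ⟨φ⟩⟩ := hex
    obtain ⟨t, ht⟩ := hc (φ.hom ≫ q a)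
    obtain ⟨s, hs'⟩ := he (p a ≫ φ.inv)
    have h2 : (φ.hom ≫ q a) ≫ (p a ≫ φ.inv) = 𝟙 _ := by
      simp [reassoc_of% (hqp a)]
    rw [ht, hs', Linear.smul_comp, Linear.comp_smul, ← hs, smul_smul, smul_smul] at h2
    have h3 : t * s * toScalar k (c ≫ e) = 1 := by
      apply h1.1
      simpa [mul_assoc] using h2
    exact IsUnit.of_mul_eq_one_right _ h3
  · push Not at hex
    have : c = 0 := by
      rw [← Category.comp_id c, ← hsum, Preadditive.comp_sum]
      refine Finset.sum_eq_zero fun a _ => ?_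
      rw [← Category.assoc, PreFusionCat.simple_hom_zero h1 (hsimp a) (by simpa using hex a) (c ≫ p a),
        zero_comp]
    have := h0 this
    exact isUnit_of_subsingleton _

theorem aux_subsingleton {i : C} (hi : IsSimpleObj k i) (h : 𝟙 i = 0) : Subsingleton k :=
  ⟨fun a b => hi.1 (by simp [h])⟩

end Helpers

/-- In a pre-fusion category over a commutative ring `k`, the left and right dimensions of
any simple object are invertible elements of `k`. -/
theorem preFusion_simple_dims_isUnit (k : Type w) [CommRing k] (C : Type u)
    [Category.{v} C] [Preadditive C] [CategoryTheory.Linear k C] [MonoidalCategory C]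
    [MonoidalPreadditive C] [CategoryTheory.MonoidalLinear k C]
    [CategoryTheory.Limits.HasFiniteBiproducts C] [PivotalCat C] [MonoidalKCat k C]
    [PreFusionCat k C] {i : C} (hi : IsSimpleObj k i) :
    IsUnit (sdiml k i) ∧ IsUnit (sdimr k i) := by
  letI E1 : ExactPairing i (PivotalCat.dual i) :=
    { coevaluation' := PivotalCat.coevl i
      evaluation' := PivotalCat.evl i
      coevaluation_evaluation' := by
        have h := PivotalCat.left_zigzag₂ i
        rw [Iso.inv_comp_eq] at h
        rw [← cancel_mono (λ_ (PivotalCat.dual i)).hom]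
        simpa using h
      evaluation_coevaluation' := by
        have h := PivotalCat.left_zigzag₁ i
        rw [Iso.inv_comp_eq] at h
        rw [← cancel_mono (ρ_ i).hom]
        simpa using h }
  letI E2 : ExactPairing (PivotalCat.dual i) i :=
    { coevaluation' := PivotalCat.coevr i
      evaluation' := PivotalCat.evr i
      coevaluation_evaluation' := by
        have h := PivotalCat.right_zigzag₁ i
        rw [Iso.inv_comp_eq] at h
        rw [← cancel_mono (λ_ i).hom]
        simpa using h
      evaluation_coevaluation' := by
        have h := PivotalCat.right_zigzag₂ i
        rw [Iso.inv_comp_eq] at h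
        rw [← cancel_mono (ρ_ (PivotalCat.dual i)).hom]
        simpa using h }
  constructor
  · have e : PivotalCat.diml i = PivotalCat.coevr i ≫ PivotalCat.evl i := by
      simp [PivotalCat.diml, PivotalCat.trl]
    rw [sdiml, e]
    refine aux_unit _ _ (fun f => aux_coev_left hi f) (fun f => aux_ev_left hi f) fun h => ?_
    refine aux_subsingleton hi ?_
    rw [← PivotalCat.right_zigzag₁ i, h]
    simp
  · have e : PivotalCat.dimr i = PivotalCat.coevl i ≫ PivotalCat.evr i := by
      simp [PivotalCat.dimr, PivotalCat.trr]
    rw [sdimr, e]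
    refine aux_unit _ _ (fun f => aux_coev_right hi f) (fun f => aux_ev_right hi f) fun h => ?_
    refine aux_subsingleton hi ?_
    rw [← PivotalCat.left_zigzag₁ i, h]
    simp
end

section
/- A pre-fusion category C over a commutative ring k is spherical if and only if dim_l(i) = dim_r(i) for every simple object i of C. -/
open CategoryTheory CategoryTheory.Limits MonoidalCategory

universe v u w

section PivotalHelpers

variable {C : Type u} [Category.{v} C] [MonoidalCategory C] [PivotalCat C]

open PivotalCat

theorem zigzag_of_unit {A B : C} {f : A ⟶ B} {g : 𝟙_ C ⊗ A ⟶ B ⊗ 𝟙_ C}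
    (h : (λ_ A).inv ≫ g ≫ (ρ_ B).hom = f) : g = (λ_ A).hom ≫ f ≫ (ρ_ B).inv := by
  subst h; simp

theorem zigzag_of_unit' {A B : C} {f : A ⟶ B} {g : A ⊗ 𝟙_ C ⟶ 𝟙_ C ⊗ B}
    (h : (ρ_ A).inv ≫ g ≫ (λ_ B).hom = f) : g = (ρ_ A).hom ≫ f ≫ (λ_ B).inv := by
  subst h; simp

@[reducible] def pairL (X : C) : ExactPairing X (dual X) where
  coevaluation' := coevl X
  evaluation' := evl X
  coevaluation_evaluation' := by
    have := zigzag_of_unit' (g := _ ◁ _ ≫ (α_ _ _ _).inv ≫ _ ▷ _)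
      ((by simp only [Category.assoc]; exact left_zigzag₂ X))
    simpa using this
  evaluation_coevaluation' := by
    have := zigzag_of_unit (g := _ ▷ _ ≫ (α_ _ _ _).hom ≫ _ ◁ _)
      ((by simp only [Category.assoc]; exact left_zigzag₁ X))
    simpa using this

@[reducible] def pairR (X : C) : ExactPairing (dual X) X where
  coevaluation' := coevr X
  evaluation' := evr X
  coevaluation_evaluation' := by
    have := zigzag_of_unit' (g := _ ◁ _ ≫ (α_ _ _ _).inv ≫ _ ▷ _)
      ((by simp only [Category.assoc]; exact right_zigzag₁ X))
    simpa using this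
  evaluation_coevaluation' := by
    have := zigzag_of_unit (g := _ ▷ _ ≫ (α_ _ _ _).hom ≫ _ ◁ _)
      ((by simp only [Category.assoc]; exact right_zigzag₂ X))
    simpa using this

@[reducible] def hasR (X : C) : HasRightDual X := { rightDual := dual X, exact := pairL X }
@[reducible] def hasL (X : C) : HasLeftDual X := { leftDual := dual X, exact := pairR X }

theorem evl_nat {X Y : C} (f : X ⟶ Y) : pdual f ▷ X ≫ evl X = dual Y ◁ f ≫ evl Y := by
  letI := hasR X
  letI := hasR Y
  exact rightAdjointMate_comp_evaluation f

theorem coevl_nat {X Y : C} (f : X ⟶ Y) : coevl Y ≫ Y ◁ pdual f = coevl X ≫ f ▷ dual X := by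
  letI := hasR X
  letI := hasR Y
  exact coevaluation_comp_rightAdjointMate f

theorem evr_nat {X Y : C} (f : X ⟶ Y) : X ◁ pdual f ≫ evr X = f ▷ dual Y ≫ evr Y := by
  letI := hasL X
  letI := hasL Y
  rw [pdual, ldual_eq_rdual]
  exact leftAdjointMate_comp_evaluation f

theorem coevr_nat {X Y : C} (f : X ⟶ Y) : coevr Y ≫ pdual f ▷ Y = coevr X ≫ dual X ◁ f := by
  letI := hasL X
  letI := hasL Y
  rw [pdual, ldual_eq_rdual]
  exact coevaluation_comp_leftAdjointMate f

theorem trl_cyclic {X Y : C} (f : X ⟶ Y) (g : Y ⟶ X) : trl (f ≫ g) = trl (g ≫ f) := by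
  simp only [trl, MonoidalCategory.whiskerLeft_comp, Category.assoc]
  rw [← evl_nat g, ← Category.assoc (coevr Y), ← coevr_nat g, Category.assoc,
    whisker_exchange_assoc]

theorem trr_cyclic {X Y : C} (f : X ⟶ Y) (g : Y ⟶ X) : trr (f ≫ g) = trr (g ≫ f) := by
  simp only [trr, MonoidalCategory.comp_whiskerRight, Category.assoc]
  rw [← evr_nat g, ← Category.assoc (coevl Y), ← coevl_nat g, Category.assoc,
    whisker_exchange_assoc]

end PivotalHelpers

/-- A pre-fusion category over a commutative ring `k` is spherical if and only if the left
and right dimensions of every simple object coincide. -/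
theorem preFusion_spherical_iff_dims_eq (k : Type w) [CommRing k] (C : Type u)
    [Category.{v} C] [Preadditive C] [CategoryTheory.Linear k C] [MonoidalCategory C]
    [MonoidalPreadditive C] [CategoryTheory.MonoidalLinear k C]
    [CategoryTheory.Limits.HasFiniteBiproducts C] [PivotalCat C] [MonoidalKCat k C]
    [PreFusionCat k C] :
    SphericalCat C ↔ ∀ i : C, IsSimpleObj k i → PivotalCat.diml i = PivotalCat.dimr i := by
  constructor
  · intro h i _
    exact SphericalCat.tr_eq (𝟙 i)
  · intro h
    refine ⟨fun {X} f => ?_⟩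
    obtain ⟨n, obj, p, q, hs, hsum, -, -⟩ := PreFusionCat.semisimple (k := k) X
    have hf : f = ∑ a, p a ≫ q a ≫ f := by
      conv_lhs => rw [← Category.id_comp f, ← hsum, Preadditive.sum_comp]
      simp
    have hl : PivotalCat.trl f = ∑ a, PivotalCat.trl (p a ≫ q a ≫ f) := by
      conv_lhs => rw [hf]
      simp only [PivotalCat.trl, whiskerLeft_sum, Preadditive.sum_comp, Preadditive.comp_sum]
    have hr : PivotalCat.trr f = ∑ a, PivotalCat.trr (p a ≫ q a ≫ f) := by
      conv_lhs => rw [hf]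
      simp only [PivotalCat.trr, sum_whiskerRight, Preadditive.sum_comp, Preadditive.comp_sum]
    rw [hl, hr]
    refine Finset.sum_congr rfl fun a _ => ?_
    rw [trl_cyclic, trr_cyclic]
    obtain ⟨c, hc⟩ := (hs a).2 ((q a ≫ f) ≫ p a)
    have hd := h _ (hs a)
    simp only [PivotalCat.diml, PivotalCat.dimr, PivotalCat.trl, PivotalCat.trr] at hd
    rw [← hc]
    simp only [PivotalCat.trl, PivotalCat.trr, MonoidalLinear.whiskerLeft_smul,
      MonoidalLinear.smul_whiskerRight, Linear.smul_comp, Linear.comp_smul, hd]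
end

section
/- Let C be a spherical fusion category over a commutative ring k and I a representative set of its simple objects. Then Σ_{j,a,b∈I} dim(a)·dim(b)·N^𝟙_{j⊗a⊗j*⊗b} = (dim(C))² in k, where the multiplicity N^𝟙_Z = rank_k Hom_C(Z, 𝟙) is regarded in k via the canonical ring map ℤ → k. -/
open CategoryTheory CategoryTheory.Limits MonoidalCategory

universe v u w

namespace PivotalCat

section
variable {C : Type u} [Category.{v} C] [MonoidalCategory C] [PivotalCat C]

lemma zl1 (X : C) : coevl X ▷ X ⊗≫ X ◁ evl X = ⊗𝟙.hom := by
  have h := left_zigzag₁ X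
  calc _ = (λ_ X).hom ≫ ((λ_ X).inv ≫ (coevl X ▷ X) ≫ (α_ X (dual X) X).hom ≫ (X ◁ evl X) ≫
        (ρ_ X).hom) ≫ (ρ_ X).inv := by monoidal
    _ = _ := by rw [h]; monoidal

lemma zl2 (X : C) : dual X ◁ coevl X ⊗≫ evl X ▷ dual X = ⊗𝟙.hom := by
  have h := left_zigzag₂ X
  calc _ = (ρ_ (dual X)).hom ≫ ((ρ_ (dual X)).inv ≫ (dual X ◁ coevl X) ≫
        (α_ (dual X) X (dual X)).inv ≫ (evl X ▷ dual X) ≫ (λ_ (dual X)).hom) ≫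
        (λ_ (dual X)).inv := by monoidal
    _ = _ := by rw [h]; monoidal

lemma zr1 (X : C) : X ◁ coevr X ⊗≫ evr X ▷ X = ⊗𝟙.hom := by
  have h := right_zigzag₁ X
  calc _ = (ρ_ X).hom ≫ ((ρ_ X).inv ≫ (X ◁ coevr X) ≫ (α_ X (dual X) X).inv ≫ (evr X ▷ X) ≫
        (λ_ X).hom) ≫ (λ_ X).inv := by monoidal
    _ = _ := by rw [h]; monoidal

lemma zr2 (X : C) : coevr X ▷ dual X ⊗≫ dual X ◁ evr X = ⊗𝟙.hom := by
  have h := right_zigzag₂ X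
  calc _ = (λ_ (dual X)).hom ≫ ((λ_ (dual X)).inv ≫ (coevr X ▷ dual X) ≫
        (α_ (dual X) X (dual X)).hom ≫ (dual X ◁ evr X) ≫ (ρ_ (dual X)).hom) ≫
        (ρ_ (dual X)).inv := by monoidal
    _ = _ := by rw [h]; monoidal

/-- left mate -/
def Lm {A W : C} (e : A ⊗ W ⟶ 𝟙_ C) : A ⟶ dual W :=
  (ρ_ A).inv ≫ A ◁ coevl W ≫ (α_ A W (dual W)).inv ≫ e ▷ dual W ≫ (λ_ (dual W)).hom

/-- right mate -/
def Rm {A W : C} (e : W ⊗ A ⟶ 𝟙_ C) : A ⟶ dual W :=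
  (λ_ A).inv ≫ coevr W ▷ A ≫ (α_ (dual W) W A).hom ≫ dual W ◁ e ≫ (ρ_ (dual W)).hom

lemma Lm_ev {A W : C} (e : A ⊗ W ⟶ 𝟙_ C) : Lm e ▷ W ≫ evl W = e := by
  unfold Lm
  calc _ = 𝟙 _ ⊗≫ A ◁ coevl W ▷ W ⊗≫ (e ▷ (dual W ⊗ W) ≫ 𝟙_ C ◁ evl W) ⊗≫ 𝟙 _ := by monoidal
    _ = 𝟙 _ ⊗≫ A ◁ (coevl W ▷ W ⊗≫ W ◁ evl W) ⊗≫ e := by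
      rw [← whisker_exchange]; monoidal
    _ = e := by rw [zl1]; monoidal

lemma Rm_ev {A W : C} (e : W ⊗ A ⟶ 𝟙_ C) : W ◁ Rm e ≫ evr W = e := by
  unfold Rm
  calc _ = 𝟙 _ ⊗≫ W ◁ coevr W ▷ A ⊗≫ ((W ⊗ dual W) ◁ e ≫ evr W ▷ 𝟙_ C) ⊗≫ 𝟙 _ := by monoidal
    _ = 𝟙 _ ⊗≫ (W ◁ coevr W ⊗≫ evr W ▷ W) ▷ A ⊗≫ e := by
      rw [whisker_exchange]; monoidal
    _ = e := by rw [zr1]; monoidal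

lemma Lm_of {A W : C} (f : A ⟶ dual W) : Lm (f ▷ W ≫ evl W) = f := by
  unfold Lm
  calc _ = 𝟙 _ ⊗≫ (A ◁ coevl W ≫ f ▷ (W ⊗ dual W)) ⊗≫ evl W ▷ dual W ⊗≫ 𝟙 _ := by monoidal
    _ = f ⊗≫ (dual W ◁ coevl W ⊗≫ evl W ▷ dual W) ⊗≫ 𝟙 _ := by
      rw [whisker_exchange]; monoidal
    _ = f := by rw [zl2]; monoidal

lemma Rm_of {A W : C} (f : A ⟶ dual W) : Rm (W ◁ f ≫ evr W) = f := by
  unfold Rm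
  calc _ = 𝟙 _ ⊗≫ (coevr W ▷ A ≫ (dual W ⊗ W) ◁ f) ⊗≫ dual W ◁ evr W ⊗≫ 𝟙 _ := by monoidal
    _ = f ⊗≫ (coevr W ▷ dual W ⊗≫ dual W ◁ evr W) ⊗≫ 𝟙 _ := by
      rw [← whisker_exchange]; monoidal
    _ = f := by rw [zr2]; monoidal

lemma L_inj {A W : C} {f g : A ⟶ dual W} (h : f ▷ W ≫ evl W = g ▷ W ≫ evl W) : f = g := by
  rw [← Lm_of f, h, Lm_of]

lemma R_inj {A W : C} {f g : A ⟶ dual W} (h : W ◁ f ≫ evr W = W ◁ g ≫ evr W) : f = g := by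
  rw [← Rm_of f, h, Rm_of]

lemma Rm_inj {A W : C} {e e' : W ⊗ A ⟶ 𝟙_ C} (h : Rm e = Rm e') : e = e' := by
  rw [← Rm_ev e, h, Rm_ev]

/-- the dual of a morphism -/
lemma pdual_evl {X Y : C} (f : X ⟶ Y) : pdual f ▷ X ≫ evl X = dual Y ◁ f ≫ evl Y := by
  have : pdual f = Lm (dual Y ◁ f ≫ evl Y) := by
    unfold pdual Lm; monoidal
  rw [this, Lm_ev]

lemma pdual_evr {X Y : C} (f : X ⟶ Y) : X ◁ pdual f ≫ evr X = f ▷ dual Y ≫ evr Y := by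
  have : pdual f = Rm (f ▷ dual Y ≫ evr Y) := by
    unfold pdual Rm; rw [ldual_eq_rdual]; monoidal
  rw [this, Rm_ev]

lemma coevr_pdual {X Y : C} (f : X ⟶ Y) : coevr X ≫ dual X ◁ f = coevr Y ≫ pdual f ▷ Y := by
  have : pdual f = Rm (f ▷ dual Y ≫ evr Y) := by
    unfold pdual Rm; rw [ldual_eq_rdual]; monoidal
  rw [this]; unfold Rm; symm
  calc _ = 𝟙 _ ⊗≫ (𝟙_ C ◁ coevr Y ≫ coevr X ▷ (dual Y ⊗ Y)) ⊗≫ dual X ◁ (f ▷ dual Y ▷ Y) ⊗≫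
        dual X ◁ evr Y ▷ Y ⊗≫ 𝟙 _ := by monoidal
    _ = coevr X ⊗≫ dual X ◁ (X ◁ coevr Y ≫ f ▷ (dual Y ⊗ Y)) ⊗≫ dual X ◁ evr Y ▷ Y ⊗≫ 𝟙 _ := by
      rw [whisker_exchange]; monoidal
    _ = coevr X ⊗≫ dual X ◁ f ⊗≫ dual X ◁ (Y ◁ coevr Y ⊗≫ evr Y ▷ Y) ⊗≫ 𝟙 _ := by
      rw [whisker_exchange]; monoidal
    _ = _ := by rw [zr1]; monoidal

lemma trl_cyc {X Y : C} (f : X ⟶ Y) (g : Y ⟶ X) : trl (f ≫ g) = trl (g ≫ f) := by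
  unfold trl
  rw [MonoidalCategory.whiskerLeft_comp, MonoidalCategory.whiskerLeft_comp]
  simp only [Category.assoc]
  rw [reassoc_of% (coevr_pdual f), ← pdual_evl f]
  simp only [whisker_exchange_assoc]

lemma coevr_unique {A W : C} (c : 𝟙_ C ⟶ A ⊗ W) (φ : A ⟶ dual W)
    (h : W ◁ c ⊗≫ (W ◁ φ ≫ evr W) ▷ W = ⊗𝟙.hom) : c ≫ φ ▷ W = coevr W := by
  symm
  calc coevr W = coevr W ⊗≫ dual W ◁ (⊗𝟙.hom : W ⊗ 𝟙_ C ⟶ 𝟙_ C ⊗ W) ⊗≫ 𝟙 _ := by monoidal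
    _ = 𝟙 _ ⊗≫ (coevr W ▷ 𝟙_ C ≫ (dual W ⊗ W) ◁ c) ⊗≫ dual W ◁ (W ◁ φ ≫ evr W) ▷ W ⊗≫ 𝟙 _ := by
      rw [← h]; monoidal
    _ = c ⊗≫ (coevr W ▷ A ≫ (dual W ⊗ W) ◁ φ) ▷ W ⊗≫ dual W ◁ evr W ▷ W ⊗≫ 𝟙 _ := by
      rw [← whisker_exchange]; monoidal
    _ = c ⊗≫ φ ▷ W ⊗≫ (coevr W ▷ dual W ⊗≫ dual W ◁ evr W) ▷ W ⊗≫ 𝟙 _ := by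
      rw [← whisker_exchange]; monoidal
    _ = _ := by rw [zr2]; monoidal

/-- nested left evaluation -/
def nl (X Y : C) : (dual X ⊗ dual Y) ⊗ (Y ⊗ X) ⟶ 𝟙_ C :=
  𝟙 _ ⊗≫ dual X ◁ (evl Y ▷ X) ⊗≫ evl X

/-- nested right evaluation -/
def nr (X Y : C) : (Y ⊗ X) ⊗ (dual X ⊗ dual Y) ⟶ 𝟙_ C :=
  𝟙 _ ⊗≫ Y ◁ (evr X ▷ dual Y) ⊗≫ evr Y

/-- nested coevaluation -/
def nc (X Y : C) : 𝟙_ C ⟶ (dual X ⊗ dual Y) ⊗ (Y ⊗ X) :=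
  coevr X ⊗≫ dual X ◁ (coevr Y ▷ X) ⊗≫ 𝟙 _

lemma mcon_L (X Y : C) : mcon X Y = Lm (nl X Y) := by
  unfold mcon Lm nl; monoidal

lemma mcon_R (X Y : C) : mcon X Y = Rm (nr X Y) := by
  unfold mcon; rw [constraint_eq]; unfold Rm nr; monoidal

lemma mcon_coevr (X Y : C) : nc X Y ≫ mcon X Y ▷ (Y ⊗ X) = coevr (Y ⊗ X) := by
  apply coevr_unique
  rw [mcon_R, Rm_ev]
  unfold nc nr
  calc _ = 𝟙 _ ⊗≫ Y ◁ X ◁ coevr X ⊗≫ Y ◁ ((X ⊗ dual X) ◁ coevr Y ≫ evr X ▷ (dual Y ⊗ Y)) ▷ X ⊗≫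
        evr Y ▷ Y ▷ X ⊗≫ 𝟙 _ := by monoidal
    _ = 𝟙 _ ⊗≫ Y ◁ (X ◁ coevr X ⊗≫ evr X ▷ X) ⊗≫ (Y ◁ coevr Y ⊗≫ evr Y ▷ Y) ▷ X ⊗≫ 𝟙 _ := by
      rw [whisker_exchange]; monoidal
    _ = _ := by rw [zr1, zr1]; monoidal

lemma diml_tensor (X Y : C) : diml (Y ⊗ X) =
    coevr X ≫ dual X ◁ ((λ_ X).inv ≫ diml Y ▷ X ≫ (λ_ X).hom) ≫ evl X := by
  unfold diml trl
  simp only [MonoidalCategory.whiskerLeft_id, Category.id_comp]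
  rw [← mcon_coevr, Category.assoc, mcon_L, Lm_ev]
  unfold nc nl
  monoidal

/-- comparison with bidual -/
def psi (X : C) : X ⟶ dual (dual X) := Rm (evl X)

lemma psi_evr (X : C) : dual X ◁ psi X ≫ evr (dual X) = evl X := Rm_ev _

lemma psi_coevr (X : C) : coevl X ≫ psi X ▷ dual X = coevr (dual X) := by
  apply coevr_unique
  rw [psi_evr, zl2]

/-- unit comparison -/
def uu : 𝟙_ C ⟶ dual (𝟙_ C) := Rm (λ_ (𝟙_ C)).hom

lemma uu_evr : 𝟙_ C ◁ (uu : 𝟙_ C ⟶ dual (𝟙_ C)) ≫ evr (𝟙_ C) = (λ_ (𝟙_ C)).hom := Rm_ev _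

lemma uu_evl : (uu : 𝟙_ C ⟶ dual (𝟙_ C)) ▷ 𝟙_ C ≫ evl (𝟙_ C) = (λ_ (𝟙_ C)).hom := by
  have h := ev_unit (C := C)
  have h1 : evl (𝟙_ C) = (ρ_ (dual (𝟙_ C))).hom ≫ (λ_ (dual (𝟙_ C))).inv ≫ evr (𝟙_ C) := by
    rw [← h]; simp
  rw [← uu_evr, h1]
  monoidal

lemma key (X : C) : (coevr X ≫ dual X ◁ psi X) ≫ mcon X (dual X) = uu ≫ pdual (evl X) := by
  apply R_inj
  rw [MonoidalCategory.whiskerLeft_comp, Category.assoc, mcon_R, Rm_ev]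
  simp only [MonoidalCategory.whiskerLeft_comp, Category.assoc]
  rw [pdual_evr, whisker_exchange_assoc, uu_evr]
  unfold nr
  calc _ = 𝟙 _ ⊗≫ dual X ◁ X ◁ coevr X ⊗≫ dual X ◁ ((X ⊗ dual X) ◁ psi X ≫ evr X ▷ dual (dual X)) ⊗≫
        evr (dual X) := by monoidal
    _ = 𝟙 _ ⊗≫ dual X ◁ (X ◁ coevr X ⊗≫ evr X ▷ X) ⊗≫ (dual X ◁ psi X ≫ evr (dual X)) := by
      rw [whisker_exchange]; monoidal
    _ = _ := by rw [zr1, psi_evr]; monoidal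

lemma key2 (X : C) : psi X ▷ dual X ≫ evl (dual X) = evr X := by
  have h := congrArg (fun t => t ▷ (dual X ⊗ X) ≫ evl (dual X ⊗ X)) (key X)
  simp only [comp_whiskerRight, Category.assoc] at h
  rw [pdual_evl, mcon_L, Lm_ev, ← whisker_exchange_assoc, uu_evl] at h
  apply Rm_inj
  have h2 : Rm (evr X) = 𝟙 (dual X) := by
    have := Rm_of (𝟙 (dual X)); simpa using this
  rw [h2]
  apply L_inj
  simp only [id_whiskerRight, Category.id_comp]
  calc _ = (λ_ _).inv ≫ coevr X ▷ (dual X ⊗ X) ≫ ((dual X ◁ psi X) ▷ (dual X ⊗ X)) ≫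
        nl X (dual X) := by unfold Rm nl; monoidal
    _ = _ := by rw [h]; monoidal

lemma diml_dual (X : C) : diml (dual X) = dimr X := by
  unfold diml trl dimr trr
  simp only [MonoidalCategory.whiskerLeft_id, id_whiskerRight, Category.id_comp]
  rw [← psi_coevr, Category.assoc, key2]

end

end PivotalCat

section Fus
variable (k : Type w) [CommRing k] {C : Type u}
    [Category.{v} C] [Preadditive C] [CategoryTheory.Linear k C] [MonoidalCategory C]
    [MonoidalPreadditive C] [CategoryTheory.MonoidalLinear k C]

section
variable [MonoidalKCat k C]

lemma toScalar_smul_s9 (f : 𝟙_ C ⟶ 𝟙_ C) : toScalar k f • 𝟙 (𝟙_ C) = f :=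
  (Equiv.ofBijective (fun a : k => a • 𝟙 (𝟙_ C))
    (MonoidalKCat.unit_free (k := k) (C := C))).apply_symm_apply f

lemma toScalar_eq {f : 𝟙_ C ⟶ 𝟙_ C} {r : k} (h : f = r • 𝟙 (𝟙_ C)) : toScalar k f = r := by
  apply (MonoidalKCat.unit_free (k := k) (C := C)).1
  simp only [toScalar_smul_s9, h]

lemma toScalar_sum {ι : Type*} (s : Finset ι) (f : ι → (𝟙_ C ⟶ 𝟙_ C)) :
    toScalar k (∑ i ∈ s, f i) = ∑ i ∈ s, toScalar k (f i) := by
  apply toScalar_eq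
  rw [Finset.sum_smul]
  simp only [toScalar_smul_s9]

variable [PivotalCat C]

lemma sdiml_tensor (X Y : C) : sdiml k (Y ⊗ X) = sdiml k Y * sdiml k X := by
  apply toScalar_eq
  rw [PivotalCat.diml_tensor]
  have h : PivotalCat.diml Y = sdiml k Y • 𝟙 (𝟙_ C) := (toScalar_smul_s9 k _).symm
  have h2 : PivotalCat.diml X = sdiml k X • 𝟙 (𝟙_ C) := (toScalar_smul_s9 k _).symm
  rw [h, mul_smul, ← h2]
  simp [PivotalCat.diml, PivotalCat.trl]

lemma sdiml_iso {X Y : C} (e : X ≅ Y) : sdiml k X = sdiml k Y := by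
  unfold sdiml PivotalCat.diml
  rw [← e.hom_inv_id, PivotalCat.trl_cyc, e.inv_hom_id]

lemma sdiml_decomp {X : C} {n : ℕ} {obj : Fin n → C} (p : ∀ a, X ⟶ obj a) (q : ∀ a, obj a ⟶ X)
    (h1 : ∑ a, p a ≫ q a = 𝟙 X) (h2 : ∀ a, q a ≫ p a = 𝟙 (obj a)) :
    sdiml k X = ∑ a, sdiml k (obj a) := by
  unfold sdiml
  rw [← toScalar_sum]
  congr 1
  unfold PivotalCat.diml
  rw [← h1]
  have : PivotalCat.trl (∑ a, p a ≫ q a) = ∑ a, PivotalCat.trl (p a ≫ q a) := by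
    simp only [PivotalCat.trl, whiskerLeft_sum, Preadditive.comp_sum, Preadditive.sum_comp]
  rw [this]
  exact Finset.sum_congr rfl fun a _ => by rw [PivotalCat.trl_cyc, h2]

end

/-- Hom into a direct sum. -/
noncomputable def homPi {X : C} {n : ℕ} {obj : Fin n → C} (p : ∀ a, X ⟶ obj a)
    (q : ∀ a, obj a ⟶ X) (h1 : ∑ a, p a ≫ q a = 𝟙 X) (h2 : ∀ a, q a ≫ p a = 𝟙 (obj a))
    (h3 : ∀ a b, a ≠ b → q a ≫ p b = 0) (b : C) : (b ⟶ X) ≃ₗ[k] (∀ a, b ⟶ obj a) where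
  toFun f a := f ≫ p a
  invFun g := ∑ a, g a ≫ q a
  map_add' f g := by ext; simp
  map_smul' r f := by ext; simp
  left_inv f := by
    simp only [Category.assoc]
    rw [← Preadditive.comp_sum, h1, Category.comp_id]
  right_inv g := by
    ext a
    simp only [Preadditive.sum_comp, Category.assoc]
    rw [Finset.sum_eq_single a]
    · simp [h2]
    · intro c _ hc; rw [h3 c a hc, comp_zero]
    · simp

/-- Hom from a simple object to an isomorphic one. -/
noncomputable def homSimple {b X : C} (hb : IsSimpleObj k b) (e : b ≅ X) : k ≃ₗ[k] (b ⟶ X) :=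
  LinearEquiv.ofBijective (LinearMap.toSpanSingleton k (b ⟶ X) e.hom) (by
    have : ⇑(LinearMap.toSpanSingleton k (b ⟶ X) e.hom) =
        e.homToEquiv ∘ (fun a : k => a • 𝟙 b) := by
      ext a; simp [Iso.homToEquiv]
    rw [this]
    exact e.homToEquiv.bijective.comp hb)

open Classical in
lemma finrank_hom [HasFiniteBiproducts C] [PivotalCat C] [MonoidalKCat k C] [PreFusionCat k C]
    [Nontrivial k] {X : C} {n : ℕ} {obj : Fin n → C} (p : ∀ a, X ⟶ obj a)
    (q : ∀ a, obj a ⟶ X) (h0 : ∀ a, IsSimpleObj k (obj a))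
    (h1 : ∑ a, p a ≫ q a = 𝟙 X) (h2 : ∀ a, q a ≫ p a = 𝟙 (obj a))
    (h3 : ∀ a b, a ≠ b → q a ≫ p b = 0) (b : C) (hb : IsSimpleObj k b) :
    Module.finrank k (b ⟶ X) = ∑ a, if Nonempty (obj a ≅ b) then 1 else 0 := by
  rw [(homPi k p q h1 h2 h3 b).finrank_eq]
  have hs : ∀ a, Module.Free k (b ⟶ obj a) ∧ Module.Finite k (b ⟶ obj a) ∧
      Module.finrank k (b ⟶ obj a) = if Nonempty (obj a ≅ b) then 1 else 0 := by
    intro a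
    by_cases h : Nonempty (obj a ≅ b)
    · obtain ⟨e⟩ := h
      let l := homSimple k hb e.symm
      refine ⟨Module.Free.of_equiv l, Module.Finite.equiv l, ?_⟩
      rw [← l.finrank_eq, if_pos ⟨e⟩, Module.finrank_self]
    · have hz : ∀ f : b ⟶ obj a, f = 0 := PreFusionCat.simple_hom_zero (k := k) hb (h0 a)
        ⟨fun e => h ⟨e.symm⟩⟩
      have : Subsingleton (b ⟶ obj a) := ⟨fun f g => by rw [hz f, hz g]⟩
      refine ⟨inferInstance, inferInstance, ?_⟩
      rw [if_neg h, Module.finrank_zero_of_subsingleton]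
  have i1 := fun a => (hs a).1
  have i2 := fun a => (hs a).2.1
  rw [Module.finrank_pi_fintype]
  exact Finset.sum_congr rfl fun a _ => (hs a).2.2

lemma dim_expand [HasFiniteBiproducts C] [PivotalCat C] [MonoidalKCat k C] [PreFusionCat k C]
    [Nontrivial k] (I : Finset C) (hI : IsRepresentativeSet k C ↑I) (X : C) :
    ∑ b ∈ I, sdiml k b * (Module.finrank k (b ⟶ X) : k) = sdiml k X := by
  classical
  obtain ⟨n, obj, p, q, h0, h1, h2, h3⟩ := PreFusionCat.semisimple (k := k) X
  rw [sdiml_decomp k p q h1 h2]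
  have : ∀ b ∈ I, sdiml k b * (Module.finrank k (b ⟶ X) : k) =
      ∑ a, if Nonempty (obj a ≅ b) then sdiml k (obj a) else 0 := by
    intro b hb
    rw [finrank_hom k p q h0 h1 h2 h3 b (hI.2.1 b hb)]
    push_cast
    rw [Finset.mul_sum]
    refine Finset.sum_congr rfl fun a _ => ?_
    split_ifs with h
    · obtain ⟨e⟩ := h
      rw [sdiml_iso k e]; simp
    · simp
  rw [Finset.sum_congr rfl this, Finset.sum_comm]
  refine Finset.sum_congr rfl fun a _ => ?_
  obtain ⟨i, ⟨hi, hi'⟩, hu⟩ := hI.2.2 (obj a) (h0 a)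
  rw [Finset.sum_eq_single i]
  · rw [if_pos hi']
  · intro b hb hne
    rw [if_neg]
    exact fun h => hne (hu b ⟨hb, h⟩)
  · exact fun h => absurd hi h

/-- Hom(Z ⊗ b, 𝟙) = Hom(b, Z*) -/
noncomputable def homDual [PivotalCat C] (Z b : C) :
    (Z ⊗ b ⟶ 𝟙_ C) ≃ₗ[k] (b ⟶ PivotalCat.dual Z) where
  toFun f := PivotalCat.Rm f
  invFun g := Z ◁ g ≫ PivotalCat.evr Z
  map_add' f g := by simp [PivotalCat.Rm]
  map_smul' r f := by simp [PivotalCat.Rm]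
  left_inv f := PivotalCat.Rm_ev f
  right_inv g := PivotalCat.Rm_of g

/-- Precomposition with an isomorphism. -/
noncomputable def homPre {X Y : C} (e : X ≅ Y) (Z : C) : (Y ⟶ Z) ≃ₗ[k] (X ⟶ Z) where
  toFun f := e.hom ≫ f
  invFun g := e.inv ≫ g
  map_add' f g := by simp
  map_smul' r f := by simp
  left_inv f := by simp
  right_inv g := by simp

end Fus

/-- Bubble identity (Lemma 4.3, formula (4.2)): in a spherical fusion category over `k`
with representative set `I` of simple objects:
`∑_{j,a,b ∈ I} dim(a)·dim(b)·N^𝟙_{j⊗a⊗j*⊗b} = (dim C)²` in `k`, where the multiplicity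
`N^𝟙_Z = rank_k Hom(Z, 𝟙)` is regarded in `k` via `ℤ → k`. -/
theorem spherical_fusion_bubble_identity_squared (k : Type w) [CommRing k] (C : Type u)
    [Category.{v} C] [Preadditive C] [CategoryTheory.Linear k C] [MonoidalCategory C]
    [MonoidalPreadditive C] [CategoryTheory.MonoidalLinear k C]
    [CategoryTheory.Limits.HasFiniteBiproducts C] [PivotalCat C] [MonoidalKCat k C]
    [PreFusionCat k C] [FusionCat k C] [SphericalCat C]
    (I : Finset C) (hI : IsRepresentativeSet k C ↑I) :
    ∑ j ∈ I, ∑ a ∈ I, ∑ b ∈ I, sdiml k a * sdiml k b *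
        (Module.finrank k ((j ⊗ a ⊗ PivotalCat.dual j ⊗ b) ⟶ 𝟙_ C) : k) =
      catDim k I ^ 2 := by
  rcases subsingleton_or_nontrivial k with hk | hk
  · exact Subsingleton.elim _ _
  have hlr : ∀ X : C, sdimr k X = sdiml k X := fun X => by
    unfold sdimr sdiml PivotalCat.dimr PivotalCat.diml
    rw [SphericalCat.tr_eq]
  have hd : ∀ X : C, sdiml k (PivotalCat.dual X) = sdiml k X := fun X => by
    rw [← hlr X]
    unfold sdiml sdimr
    rw [PivotalCat.diml_dual]
  have hin : ∀ j a : C, ∑ b ∈ I, sdiml k a * sdiml k b *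
        (Module.finrank k ((j ⊗ a ⊗ PivotalCat.dual j ⊗ b) ⟶ 𝟙_ C) : k) =
      (sdiml k j * sdiml k j) * (sdiml k a * sdiml k a) := by
    intro j a
    have h : ∀ b : C, Module.finrank k ((j ⊗ a ⊗ PivotalCat.dual j ⊗ b) ⟶ 𝟙_ C) =
        Module.finrank k (b ⟶ PivotalCat.dual (j ⊗ a ⊗ PivotalCat.dual j)) := by
      intro b
      rw [← (homDual k (j ⊗ a ⊗ PivotalCat.dual j) b).finrank_eq]
      refine (homPre k (?_ : (j ⊗ a ⊗ PivotalCat.dual j) ⊗ b ≅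
        j ⊗ a ⊗ PivotalCat.dual j ⊗ b) (𝟙_ C)).finrank_eq
      exact α_ _ _ _ ≪≫ whiskerLeftIso j (α_ _ _ _)
    simp only [h, mul_assoc]
    rw [← Finset.mul_sum, dim_expand k I hI, hd, sdiml_tensor, sdiml_tensor, hd]
    ring
  simp only [hin]
  unfold catDim
  simp only [hlr]
  rw [sq, Finset.sum_mul_sum]
end
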